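/- arXiv:1801.09169 — 2 statements merged into one kernel-verified Lean document; each statement's English description precedes it below -/
import Mathlib

section
/- Let Q be a finite quiver with no oriented cycles, K an algebraically closed field, and let d = Σ_{r=1}^s d^{(r)} be the canonical decomposition of the dimension vector d. Then the generic number of parameters of Rep_d(KQ) is μ(d) = Σ_{r=1}^s (1 − ⟨d^{(r)}, d^{(r)}⟩), where ⟨−,−⟩ is the Euler form of Q. In particular, Rep_d(KQ) contains a dense GL(d)-orbit if and only if Σ_{r=1}^s (1 − ⟨d^{(r)}, d^{(r)}⟩) = 0. -/
open Finset

/-! # Varieties of representations of a quiver with relations: basic setup -/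

/-- The Zariski topology on the affine space `ι → K`: it is generated by the basic open
sets `D(p) = {x | p(x) ≠ 0}`, where `p` ranges over multivariate polynomials. -/
def zariskiTopology (ι K : Type) [CommSemiring K] : TopologicalSpace (ι → K) :=
  TopologicalSpace.generateFrom
    {U | ∃ p : MvPolynomial ι K, U = {x | MvPolynomial.eval x p ≠ 0}}

/-- A finite quiver `Q`: vertices `Fin n`, arrows `Fin numArrows` with source and
target maps. -/
structure QuiverData where
  n : ℕ
  numArrows : ℕ
  src : Fin numArrows → Fin n
  tgt : Fin numArrows → Fin n

namespace QuiverData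

variable (Q : QuiverData) (d : Fin Q.n → ℕ) (K : Type) [Field K]

/-- Index of the coordinates of the affine space of `d`-dimensional representations:
for each arrow `a` a matrix entry index in `Fin (d (tgt a)) × Fin (d (src a))`. -/
abbrev Coords := Σ a : Fin Q.numArrows, Fin (d (Q.tgt a)) × Fin (d (Q.src a))

/-- The affine space of `d`-dimensional representations of `Q`:
a point `x` assigns to each arrow `a` a `d (tgt a) × d (src a)` matrix over `K`. -/
abbrev RepSpace := Coords Q d → K

/-- `RepSpace` carries the Zariski topology. -/
noncomputable instance instRepTop : TopologicalSpace (RepSpace Q d K) :=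
  zariskiTopology (Coords Q d) K

/-- The underlying `K`-vector space `⊕ᵢ K^{dᵢ}` of any `d`-dimensional representation. -/
abbrev Carrier := (Σ i : Fin Q.n, Fin (d i)) → K

/-- The projection onto the component of the `i`-th vertex (action of the primitive
idempotent `eᵢ`). -/
def proj (i : Fin Q.n) : Carrier Q d K →ₗ[K] Carrier Q d K where
  toFun m := fun jv => if jv.1 = i then m jv else 0
  map_add' u v := by
    funext jv; by_cases h : jv.1 = i <;> simp [h]
  map_smul' c u := by
    funext jv; by_cases h : jv.1 = i <;> simp [h]

/-- The action of the arrow `a` on the carrier space of the representation `x`. -/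
noncomputable def arrowMap (x : RepSpace Q d K) (a : Fin Q.numArrows) :
    Carrier Q d K →ₗ[K] Carrier Q d K where
  toFun m := fun jv =>
    if h : jv.1 = Q.tgt a then
      ∑ w : Fin (d (Q.src a)), x ⟨a, (Fin.cast (congrArg d h) jv.2, w)⟩ * m ⟨Q.src a, w⟩
    else 0
  map_add' u v := by
    funext jv
    by_cases h : jv.1 = Q.tgt a <;> simp [h, mul_add, Finset.sum_add_distrib]
  map_smul' c u := by
    funext jv
    by_cases h : jv.1 = Q.tgt a <;>
      simp [h, Finset.mul_sum, mul_comm, mul_left_comm, mul_assoc]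

/-- The action of a word `w = [a_k, …, a_1]` of arrows on the representation `x`
(the arrow `a_1` acts first; non-composable words act as `0`). -/
noncomputable def wordMap (x : RepSpace Q d K) (w : List (Fin Q.numArrows)) :
    Module.End K (Carrier Q d K) :=
  (w.map fun a => (arrowMap Q d K x a : Module.End K (Carrier Q d K))).prod

/-- The submodule `J^l · M_x` of the module `M_x`: the sum of the images of all words of
arrows of length `l` (for an admissible ideal, the radical acts through the arrows). -/
noncomputable def radPow (x : RepSpace Q d K) (l : ℕ) : Submodule K (Carrier Q d K) :=
  ⨆ w : {w : List (Fin Q.numArrows) // w.length = l},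
    LinearMap.range (wordMap Q d K x w.1)

/-- The socle series of `M_x`: `socPow x l = soc_l(M_x)`. -/
noncomputable def socPow (x : RepSpace Q d K) : ℕ → Submodule K (Carrier Q d K)
  | 0 => ⨅ a, LinearMap.ker (arrowMap Q d K x a)
  | (l+1) => ⨅ a, (socPow x l).comap (arrowMap Q d K x a)

/-- The dimension, at the vertex `i`, of a (vertex-graded) subspace `N`. -/
noncomputable def vdim (N : Submodule K (Carrier Q d K)) (i : Fin Q.n) : ℕ :=
  Module.finrank K (N.map (proj Q d K i))

/-- The radical layering `S(M_x) = (M/JM, JM/J²M, …, J^L M/J^{L+1} M)` of the module `M_x`,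
recorded through the dimension vectors of its semisimple layers. -/
noncomputable def radLayering (L : ℕ) (x : RepSpace Q d K) :
    Fin (L+1) → Fin Q.n → ℕ :=
  fun l i => vdim Q d K (radPow Q d K x l) i - vdim Q d K (radPow Q d K x (l+1)) i

/-- The socle layering `S*(M_x) = (soc₀M, soc₁M/soc₀M, …)` of the module `M_x`, recorded
through the dimension vectors of its semisimple layers. -/
noncomputable def socLayering (L : ℕ) (x : RepSpace Q d K) :
    Fin (L+1) → Fin Q.n → ℕ :=
  fun l i => vdim Q d K (socPow Q d K x l) i -
    (if (l : ℕ) = 0 then 0 else vdim Q d K (socPow Q d K x ((l : ℕ) - 1)) i)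

end QuiverData

/-- The dominance order on semisimple sequences (recorded as sequences of dimension
vectors): `dominates S S'` means `S ≤ S'`, i.e. `⊕_{j≤l} S_j ⊆ ⊕_{j≤l} S'_j` for all `l`. -/
def dominates {n L : ℕ} (S S' : Fin (L+1) → Fin n → ℕ) : Prop :=
  ∀ (l : Fin (L+1)) (i : Fin n),
    ∑ j ∈ Finset.univ.filter (fun j => j ≤ l), S j i ≤
      ∑ j ∈ Finset.univ.filter (fun j => j ≤ l), S' j i

/-- A semisimple sequence has dimension vector `d` if its layers' dimension vectors sum
to `d`. -/
def hasDimVec {n L : ℕ} (S : Fin (L+1) → Fin n → ℕ) (d : Fin n → ℕ) : Prop :=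
  ∀ i, ∑ l, S l i = d i

namespace QuiverData

variable (Q : QuiverData) (d : Fin Q.n → ℕ) (K : Type) [Field K]

/-- Evaluation of a formal noncommutative polynomial in the vertices (`Sum.inl`) and
arrows (`Sum.inr`) of `Q` on the representation `x`; an element of the path algebra `KQ`
is represented by such a polynomial. -/
noncomputable def evalRel (x : RepSpace Q d K) :
    FreeAlgebra K (Fin Q.n ⊕ Fin Q.numArrows) →ₐ[K] Module.End K (Carrier Q d K) :=
  FreeAlgebra.lift K
    (Sum.elim (fun i => (proj Q d K i : Module.End K (Carrier Q d K)))
      (fun a => (arrowMap Q d K x a : Module.End K (Carrier Q d K))))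

/-- The affine variety `Rep_d(Λ)` for `Λ = KQ/I`, where the ideal `I` is generated by the
set `R` of relations: the set of points of `RepSpace` annihilating every relation. -/
def RepVar (R : Set (FreeAlgebra K (Fin Q.n ⊕ Fin Q.numArrows))) :
    Set (RepSpace Q d K) :=
  {x | ∀ r ∈ R, evalRel Q d K x r = 0}

/-- The affine variety `Rep_d(Λ)` for the truncated path algebra
`Λ = KQ/⟨all paths of length L+1⟩`. -/
def TruncRepVar (L : ℕ) : Set (RepSpace Q d K) :=
  {x | ∀ w : List (Fin Q.numArrows), w.length = L + 1 → wordMap Q d K x w = 0}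

/-- A submodule of `M_x`, i.e. a subspace stable under the arrows and the vertex
idempotents. -/
def Stable (x : RepSpace Q d K) (N : Submodule K (Carrier Q d K)) : Prop :=
  (∀ a, N.map (arrowMap Q d K x a) ≤ N) ∧ ∀ i, N.map (proj Q d K i) ≤ N

/-- A submodule `N` of `M_x` is indecomposable (as a module). -/
def IndecompSub (x : RepSpace Q d K) (N : Submodule K (Carrier Q d K)) : Prop :=
  N ≠ ⊥ ∧ ∀ N₁ N₂ : Submodule K (Carrier Q d K),
    Stable Q d K x N₁ → Stable Q d K x N₂ → N₁ ≤ N → N₂ ≤ N →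
    N₁ ⊔ N₂ = N → N₁ ⊓ N₂ = ⊥ → N₁ = ⊥ ∨ N₂ = ⊥

/-- The module `M_x` is indecomposable. -/
def IndecompRep (x : RepSpace Q d K) : Prop :=
  IndecompSub Q d K x ⊤

/-- The module `M_x` is uniserial: its submodules form a chain. -/
def UniserialRep (x : RepSpace Q d K) : Prop :=
  ∀ N₁ N₂ : Submodule K (Carrier Q d K),
    Stable Q d K x N₁ → Stable Q d K x N₂ → N₁ ≤ N₂ ∨ N₂ ≤ N₁

/-- `M_x` decomposes as a direct sum of `s` indecomposable submodules whose dimension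
vectors are `D 0, …, D (s-1)`. -/
def DecompWith (x : RepSpace Q d K) (s : ℕ) (D : Fin s → Fin Q.n → ℕ) : Prop :=
  ∃ N : Fin s → Submodule K (Carrier Q d K),
    (∀ r, Stable Q d K x (N r)) ∧
    (∀ r, Disjoint (N r) (⨆ t, ⨆ (_ : t ≠ r), N t)) ∧
    (⨆ r, N r) = ⊤ ∧
    (∀ r, IndecompSub Q d K x (N r)) ∧
    ∀ r i, vdim Q d K (N r) i = D r i

/-- A homomorphism of representations `M_x → M_y` (for possibly different dimension
vectors): a linear map commuting with the arrow actions and the vertex projections. -/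
def RepHom (dx dy : Fin Q.n → ℕ) (x : RepSpace Q dx K) (y : RepSpace Q dy K)
    (φ : Carrier Q dx K →ₗ[K] Carrier Q dy K) : Prop :=
  (∀ a, φ ∘ₗ arrowMap Q dx K x a = arrowMap Q dy K y a ∘ₗ φ) ∧
  ∀ i, φ ∘ₗ proj Q dx K i = proj Q dy K i ∘ₗ φ

/-- The submodule `N` of `M_x` is isomorphic, as a representation, to `M_y`. -/
def SubrepIso (dy : Fin Q.n → ℕ) (x : RepSpace Q d K)
    (N : Submodule K (Carrier Q d K)) (y : RepSpace Q dy K) : Prop :=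
  ∃ φ : Carrier Q d K →ₗ[K] Carrier Q dy K,
    N ⊓ LinearMap.ker φ = ⊥ ∧ N.map φ = ⊤ ∧
    (∀ a, ∀ m ∈ N, φ (arrowMap Q d K x a m) = arrowMap Q dy K y a (φ m)) ∧
    (∀ i, ∀ m ∈ N, φ (proj Q d K i m) = proj Q dy K i (φ m))

/-- The representations `M_x` and `M_y` are isomorphic; the isomorphism classes are
exactly the orbits of the `GL(d)`-action. -/
def IsoRep (x y : RepSpace Q d K) : Prop :=
  ∃ φ : Carrier Q d K ≃ₗ[K] Carrier Q d K,
    (∀ a m, φ (arrowMap Q d K x a m) = arrowMap Q d K y a (φ m)) ∧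
    ∀ i m, φ (proj Q d K i m) = proj Q d K i (φ m)

/-- The `GL(d)`-orbit of the point `x`, i.e. the set of points encoding modules
isomorphic to `M_x`. -/
def orbitSet (x : RepSpace Q d K) : Set (RepSpace Q d K) :=
  {y | IsoRep Q d K x y}

/-- Given a family `P` of varieties `Rep_dv(Λ)` (one for every dimension vector `dv`),
`Ext¹_Λ(M_x, M_y) = 0`: every extension `0 → M_y → E → M_x → 0` of `Λ`-modules splits. -/
def Ext1Zero (P : ∀ dv : Fin Q.n → ℕ, Set (RepSpace Q dv K))
    (dx dy : Fin Q.n → ℕ) (x : RepSpace Q dx K) (y : RepSpace Q dy K) : Prop :=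
  ∀ z ∈ P (fun i => dx i + dy i),
    ∀ (ι : Carrier Q dy K →ₗ[K] Carrier Q (fun i => dx i + dy i) K)
      (π : Carrier Q (fun i => dx i + dy i) K →ₗ[K] Carrier Q dx K),
      RepHom Q K dy (fun i => dx i + dy i) y z ι →
      RepHom Q K (fun i => dx i + dy i) dx z x π →
      Function.Injective ι → Function.Surjective π →
      LinearMap.ker π = LinearMap.range ι →
      ∃ σ : Carrier Q dx K →ₗ[K] Carrier Q (fun i => dx i + dy i) K,
        RepHom Q K dx (fun i => dx i + dy i) x z σ ∧ π ∘ₗ σ = LinearMap.id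

/-- The direct sum `C₁ ⊕ ⋯ ⊕ C_s` of subvarieties `C_r ⊆ Rep_{D r}(Λ)`: the set of
points `x ∈ Rep_d(Λ)` whose module decomposes as `M_x ≅ ⊕_r M^{(r)}` with `M^{(r)}`
encoded by a point of `C_r`. -/
def DirectSumSet (s : ℕ) (D : Fin s → Fin Q.n → ℕ)
    (Cs : ∀ r : Fin s, Set (RepSpace Q (D r) K)) : Set (RepSpace Q d K) :=
  {x | ∃ N : Fin s → Submodule K (Carrier Q d K),
    (∀ r, Stable Q d K x (N r)) ∧
    (∀ r, Disjoint (N r) (⨆ t, ⨆ (_ : t ≠ r), N t)) ∧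
    (⨆ r, N r) = ⊤ ∧
    ∀ r, ∃ y ∈ Cs r, SubrepIso Q d K (D r) x (N r) y}

/-- The endomorphism space `End_Λ(M_x)` of the module `M_x`. -/
def endSpace (x : RepSpace Q d K) :
    Submodule K (Carrier Q d K →ₗ[K] Carrier Q d K) where
  carrier := {φ | RepHom Q K d d x x φ}
  add_mem' := by
    intro φ ψ hφ hψ
    exact ⟨fun a => by rw [LinearMap.add_comp, LinearMap.comp_add, hφ.1 a, hψ.1 a],
      fun i => by rw [LinearMap.add_comp, LinearMap.comp_add, hφ.2 i, hψ.2 i]⟩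
  zero_mem' := by
    exact ⟨fun a => by simp, fun i => by simp⟩
  smul_mem' := by
    intro c φ hφ
    exact ⟨fun a => by rw [LinearMap.smul_comp, LinearMap.comp_smul, hφ.1 a],
      fun i => by rw [LinearMap.smul_comp, LinearMap.comp_smul, hφ.2 i]⟩

/-- A word of arrows is a (composable) path when read in function-composition order. -/
def IsPathWord (w : List (Fin Q.numArrows)) : Prop :=
  List.Chain' (fun a b => Q.src a = Q.tgt b) w

/-- The quiver `Q` has no oriented cycles. -/
def Acyclic : Prop :=
  ∀ (a : Fin Q.numArrows) (w : List (Fin Q.numArrows)),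
    IsPathWord Q (a :: w) →
      Q.tgt a ≠ Q.src ((a :: w).getLast (List.cons_ne_nil a w))

/-- A filtration `M_x = F 0 ⊇ F 1 ⊇ ⋯ ⊇ F (L+1) = 0` by submodules which is governed by
the semisimple sequence `S`: each layer `F l / F (l+1)` is semisimple, isomorphic to `S l`. -/
def Governed (L : ℕ) (x : RepSpace Q d K) (S : Fin (L+1) → Fin Q.n → ℕ)
    (F : Fin (L+2) → Submodule K (Carrier Q d K)) : Prop :=
  F 0 = ⊤ ∧ F (Fin.last (L+1)) = ⊥ ∧
  (∀ l : Fin (L+1), F l.succ ≤ F l.castSucc) ∧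
  (∀ (l : Fin (L+2)) (i : Fin Q.n), (F l).map (proj Q d K i) ≤ F l) ∧
  (∀ (l : Fin (L+1)) (a : Fin Q.numArrows),
      (F l.castSucc).map (arrowMap Q d K x a) ≤ F l.succ) ∧
  ∀ (l : Fin (L+1)) (i : Fin Q.n),
      vdim Q d K (F l.castSucc) i = S l i + vdim Q d K (F l.succ) i

/-- `Filt S`: the set of points whose module has a filtration governed by `S`. -/
def FiltSet (L : ℕ) (S : Fin (L+1) → Fin Q.n → ℕ) : Set (RepSpace Q d K) :=
  {x | ∃ F, Governed Q d K L x S F}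

/-- `Γ(M_x)`: the number of semisimple sequences which are realizable (i.e. occur as the
radical layering of a module in the variety `P`) and which govern some filtration of `M_x`. -/
noncomputable def gammaCount (L : ℕ) (P : Set (RepSpace Q d K))
    (x : RepSpace Q d K) : ℕ :=
  Set.ncard {S : Fin (L+1) → Fin Q.n → ℕ |
    (∃ y ∈ P, radLayering Q d K L y = S) ∧ ∃ F, Governed Q d K L x S F}

/-- `Sstar` is the generic (= minimal, attained) socle layering of the modules in `W`. -/
def GenSoc (L : ℕ) (W : Set (RepSpace Q d K))
    (Sstar : Fin (L+1) → Fin Q.n → ℕ) : Prop :=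
  (∀ x ∈ W, dominates Sstar (socLayering Q d K L x)) ∧
  ∃ x ∈ W, socLayering Q d K L x = Sstar

end QuiverData

namespace QuiverData

variable (Q : QuiverData)

/-- The `i`-th entry of the row vector `e·A` (over `ℤ`), where `A` is the adjacency
matrix of `Q`: the sum of `e (src a)` over all arrows `a` ending at `i`. -/
def inflowZ (e : Fin Q.n → ℤ) (i : Fin Q.n) : ℤ :=
  ∑ a ∈ Finset.univ.filter (fun a => Q.tgt a = i), e (Q.src a)

/-- The `i`-th entry of the row vector `e·B` (over `ℤ`), where `B` is the transpose of
the adjacency matrix of `Q`. -/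
def outflowZ (e : Fin Q.n → ℤ) (i : Fin Q.n) : ℤ :=
  ∑ a ∈ Finset.univ.filter (fun a => Q.src a = i), e (Q.tgt a)

/-- Partial sums `t⁽⁰⁾ + ⋯ + t⁽ˡ⁾` of the recursion
`t⁽⁰⁾ = sup{0, d − d·A}`, `t⁽ˡ⁺¹⁾ = sup{0, (d − ∑_{k≤l} t⁽ᵏ⁾) − (d − ∑_{k≤l} t⁽ᵏ⁾)·A}`
(computed componentwise). -/
def cumLayer (dz : Fin Q.n → ℤ) : ℕ → Fin Q.n → ℤ
  | 0 => fun i => max 0 (dz i - inflowZ Q dz i)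
  | (l+1) => fun i =>
      cumLayer dz l i +
        max 0 ((dz i - cumLayer dz l i) -
          inflowZ Q (fun j => dz j - cumLayer dz l j) i)

/-- The positive part `∑ᵢ eᵢ fᵢ` of the Euler form of `Q`. -/
def eulerHomPart (e f : Fin Q.n → ℕ) : ℕ := ∑ i, e i * f i

/-- The negative part `∑_{α} e_{src α} f_{tgt α}` of the Euler form of `Q`, so that
`⟨e, f⟩ = eulerHomPart e f − eulerExtPart e f`. -/
def eulerExtPart (e f : Fin Q.n → ℕ) : ℕ :=
  ∑ a, e (Q.src a) * f (Q.tgt a)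

end QuiverData

/-- The quiver with a single vertex and `r` loops. -/
def QuiverData.loopQuiver (r : ℕ) : QuiverData :=
  ⟨1, r, fun _ => 0, fun _ => 0⟩

namespace QuiverData

variable (Q : QuiverData) (d : Fin Q.n → ℕ) (K : Type) [Field K]

/-- The variety `Rep_d(Λ)` for `Λ = KQ/⟨Rels⟩`, regarded as a topological space with the
(subspace) Zariski topology. -/
abbrev GenV (Rels : Set (FreeAlgebra K (Fin Q.n ⊕ Fin Q.numArrows))) :=
  {y : RepSpace Q d K // y ∈ RepVar Q d K Rels}

/-- The variety `Rep_d(Λ)` for the truncated path algebra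
`Λ = KQ/⟨paths of length L+1⟩`, regarded as a topological space. -/
abbrev TruncV (L : ℕ) := {y : RepSpace Q d K // y ∈ TruncRepVar Q d K L}

end QuiverData

/-!
Near a point `x` the orbit of `x` is parametrised by an open subset of an affine space whose
dimension is the rank of `g ↦ (g X_a - X_a g)_a` on `⊕ᵢ End(K^{dᵢ})`. Hence at a point `x` of the
given dense open set where this rank is maximal, it is the maximal orbit dimension, and a dense
orbit exists if and only if it equals `dim Rep_d(KQ)`.

Let `f_r` be the primitive idempotents of `End(M_x)` belonging to its indecomposable summands.
Maximality of the rank forces every off-diagonal family `(f_r z_a f_t)_a`, `r ≠ t`, to be tangent to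
the orbit: there are no extensions between different generic summands. Moreover `f_r End(M_x) f_r`
consists of scalars: otherwise it contains a nonzero endomorphism of square zero, which yields a
line through `x` whose other points all have one more orthogonal idempotent endomorphism, whereas a
generic representation is a sum of only `s` indecomposables. Comparing dimensions of the
block-diagonal parts of `⊕ᵢ End(K^{dᵢ})`, of `Rep_d(KQ)` and of the tangent space of the orbit gives
the formula.
-/

/-! ### Zariski topology on affine space -/

namespace zariskiTopology

attribute [local instance] zariskiTopology

variable {ι K : Type} [Field K]

lemma isOpen_setOf_eval_ne_zero (p : MvPolynomial ι K) :
    IsOpen {x : ι → K | MvPolynomial.eval x p ≠ 0} :=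
  TopologicalSpace.isOpen_generateFrom_of_mem ⟨p, rfl⟩

lemma exists_eval_ne_zero_of_mem_isOpen {U : Set (ι → K)} (hU : IsOpen U) {x : ι → K}
    (hx : x ∈ U) :
    ∃ p : MvPolynomial ι K, MvPolynomial.eval x p ≠ 0 ∧
      ∀ y, MvPolynomial.eval y p ≠ 0 → y ∈ U := by
  induction hU with
  | basic s hs =>
    obtain ⟨p, rfl⟩ := hs
    exact ⟨p, hx, fun y hy => hy⟩
  | univ => exact ⟨1, by simp, fun y _ => trivial⟩
  | inter s t _ _ ihs iht =>
    obtain ⟨p, hp, hps⟩ := ihs hx.1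
    obtain ⟨q, hq, hqt⟩ := iht hx.2
    refine ⟨p * q, by simp [hp, hq], fun y hy => ?_⟩
    rw [map_mul] at hy
    exact ⟨hps y (left_ne_zero_of_mul hy), hqt y (right_ne_zero_of_mul hy)⟩
  | sUnion S _ ih =>
    obtain ⟨s, hs, hxs⟩ := hx
    obtain ⟨p, hp, hps⟩ := ih s hs hxs
    exact ⟨p, hp, fun y hy => ⟨s, hs, hps y hy⟩⟩

theorem irreducibleSpace [Infinite K] : IrreducibleSpace (ι → K) where
  isPreirreducible_univ := by
    rintro U V hU hV ⟨x, -, hx⟩ ⟨y, -, hy⟩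
    obtain ⟨p, hp, hpU⟩ := exists_eval_ne_zero_of_mem_isOpen hU hx
    obtain ⟨q, hq, hqV⟩ := exists_eval_ne_zero_of_mem_isOpen hV hy
    have hpq : p * q ≠ 0 :=
      mul_ne_zero (by rintro rfl; simp at hp) (by rintro rfl; simp at hq)
    obtain ⟨z, hz⟩ : ∃ z, MvPolynomial.eval z (p * q) ≠ 0 := by
      by_contra! h
      exact hpq (MvPolynomial.funext fun z => by simpa using h z)
    rw [map_mul] at hz
    exact ⟨z, trivial, hpU z (left_ne_zero_of_mul hz), hqV z (right_ne_zero_of_mul hz)⟩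
  toNonempty := ⟨0⟩

end zariskiTopology

section RegularFunctions

attribute [local instance] zariskiTopology

variable {ι κ K : Type} [Field K]

/-- Regular functions on a subset of affine space: a quotient of two polynomials with
denominator not vanishing on the subset. -/
def IsRegularOn (A : Set (ι → K)) (f : (ι → K) → K) : Prop :=
  ∃ u v : MvPolynomial ι K, ∀ a ∈ A, MvPolynomial.eval a v ≠ 0 ∧
    f a * MvPolynomial.eval a v = MvPolynomial.eval a u

namespace IsRegularOn

variable {A B : Set (ι → K)} {f g : (ι → K) → K}

lemma const (A : Set (ι → K)) (c : K) : IsRegularOn A (fun _ => c) :=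
  ⟨MvPolynomial.C c, 1, fun a _ => by simp⟩

lemma coord (A : Set (ι → K)) (i : ι) : IsRegularOn A (fun a => a i) :=
  ⟨MvPolynomial.X i, 1, fun a _ => by simp⟩

lemma congr (hf : IsRegularOn A f) (h : Set.EqOn f g A) : IsRegularOn A g := by
  obtain ⟨u, v, huv⟩ := hf
  exact ⟨u, v, fun a ha => h ha ▸ huv a ha⟩

lemma add (hf : IsRegularOn A f) (hg : IsRegularOn A g) : IsRegularOn A (fun a => f a + g a) := by
  obtain ⟨u, v, h⟩ := hf
  obtain ⟨u', v', h'⟩ := hg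
  refine ⟨u * v' + u' * v, v * v', fun a ha => ⟨?_, ?_⟩⟩
  · simp [(h a ha).1, (h' a ha).1]
  · simp only [map_mul, map_add, ← (h a ha).2, ← (h' a ha).2]; ring

lemma mul (hf : IsRegularOn A f) (hg : IsRegularOn A g) : IsRegularOn A (fun a => f a * g a) := by
  obtain ⟨u, v, h⟩ := hf
  obtain ⟨u', v', h'⟩ := hg
  refine ⟨u * u', v * v', fun a ha => ⟨?_, ?_⟩⟩
  · simp [(h a ha).1, (h' a ha).1]
  · simp only [map_mul, ← (h a ha).2, ← (h' a ha).2]; ring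

lemma neg (hf : IsRegularOn A f) : IsRegularOn A (fun a => - f a) := by
  simpa using (const A (-1)).mul hf

lemma sub (hf : IsRegularOn A f) (hg : IsRegularOn A g) : IsRegularOn A (fun a => f a - g a) := by
  simpa [sub_eq_add_neg] using hf.add hg.neg

lemma inv (hf : IsRegularOn A f) (h0 : ∀ a ∈ A, f a ≠ 0) : IsRegularOn A (fun a => (f a)⁻¹) := by
  obtain ⟨u, v, h⟩ := hf
  refine ⟨v, u, fun a ha => ⟨?_, ?_⟩⟩
  · rw [← (h a ha).2]; exact mul_ne_zero (h0 a ha) (h a ha).1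
  · rw [← (h a ha).2]; field_simp [h0 a ha]

lemma sum {α : Type*} (s : Finset α) {f : α → (ι → K) → K} (hf : ∀ j, IsRegularOn A (f j)) :
    IsRegularOn A (fun a => ∑ j ∈ s, f j a) := by
  classical
  induction s using Finset.induction_on with
  | empty => simpa using const A 0
  | insert j s hj ih => simpa [Finset.sum_insert hj] using (hf j).add ih

lemma prod {α : Type*} (s : Finset α) {f : α → (ι → K) → K} (hf : ∀ j, IsRegularOn A (f j)) :
    IsRegularOn A (fun a => ∏ j ∈ s, f j a) := by
  classical
  induction s using Finset.induction_on with
  | empty => simpa using const A 1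
  | insert j s hj ih => simpa [Finset.prod_insert hj] using (hf j).mul ih

lemma det {α : Type*} [Fintype α] [DecidableEq α] {M : (ι → K) → Matrix α α K}
    (hM : ∀ i j, IsRegularOn A (fun a => M a i j)) : IsRegularOn A (fun a => (M a).det) := by
  simp only [Matrix.det_apply']
  exact sum _ fun σ => (const A _).mul (prod _ fun i => hM _ _)

lemma matrix_inv {α : Type*} [Fintype α] [DecidableEq α] {M : (ι → K) → Matrix α α K}
    (hM : ∀ i j, IsRegularOn A (fun a => M a i j)) (h0 : ∀ a ∈ A, (M a).det ≠ 0) (i j : α) :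
    IsRegularOn A (fun a => (M a)⁻¹ i j) := by
  simp only [Matrix.inv_def, Ring.inverse_eq_inv', Matrix.smul_apply, smul_eq_mul,
    Matrix.adjugate_apply]
  refine ((det hM).inv h0).mul (det fun k l => ?_)
  by_cases hk : k = j
  · subst hk; simpa using const A _
  · simpa [Matrix.updateRow_ne hk] using hM k l

lemma matrix_mul {α β γ : Type*} [Fintype β] {M : (ι → K) → Matrix α β K}
    {N : (ι → K) → Matrix β γ K}
    (hM : ∀ i j, IsRegularOn A (fun a => M a i j)) (hN : ∀ i j, IsRegularOn A (fun a => N a i j))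
    (i : α) (j : γ) : IsRegularOn A (fun a => (M a * N a) i j) := by
  simp only [Matrix.mul_apply]
  exact sum _ fun k => (hM _ _).mul (hN _ _)

lemma mono (h : B ⊆ A) (hf : IsRegularOn A f) : IsRegularOn B f := by
  obtain ⟨u, v, h'⟩ := hf
  exact ⟨u, v, fun a ha => h' a (h ha)⟩

lemma linearMap [Finite ι] (A : Set (ι → K)) (φ : Module.Dual K (ι → K)) :
    IsRegularOn A (fun a => φ a) := by
  classical
  cases nonempty_fintype ι
  rw [funext φ.pi_apply_eq_sum_univ]
  exact sum _ fun i => (coord A i).mul (const A _)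

lemma comp {F : (ι → K) → (κ → K)} {C : Set (κ → K)} {f : (κ → K) → K} (hf : IsRegularOn C f)
    (hF : ∀ j, IsRegularOn A (fun a => F a j)) (hFC : ∀ a ∈ A, F a ∈ C) :
    IsRegularOn A (fun a => f (F a)) := by
  have key : ∀ p : MvPolynomial κ K, IsRegularOn A (fun a => MvPolynomial.eval (F a) p) := by
    intro p
    induction p using MvPolynomial.induction_on with
    | C c => simpa using const A c
    | add p q hp hq => simpa using hp.add hq
    | mul_X p j hp => simpa using hp.mul (hF j)
  obtain ⟨u, v, h⟩ := hf
  obtain ⟨u', v', h'⟩ := (key u).mul ((key v).inv fun a ha => (h _ (hFC a ha)).1)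
  refine ⟨u', v', fun a ha => ⟨(h' a ha).1, ?_⟩⟩
  rw [← (h' a ha).2]
  have h1 := (h _ (hFC a ha)).1
  have h2 := (h _ (hFC a ha)).2
  simp only
  rw [← h2]
  field_simp

lemma isOpen_ne_zero (hA : IsOpen A) (hf : IsRegularOn A f) : IsOpen {a | a ∈ A ∧ f a ≠ 0} := by
  obtain ⟨u, v, h⟩ := hf
  have : {a | a ∈ A ∧ f a ≠ 0} = A ∩ {a | MvPolynomial.eval a u ≠ 0} := by
    ext a
    simp only [Set.mem_ofPred_eq, Set.mem_inter_iff, and_congr_right_iff]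
    intro ha
    rw [← (h a ha).2]
    simp [(h a ha).1]
  rw [this]
  exact hA.inter (zariskiTopology.isOpen_setOf_eval_ne_zero u)

lemma isOpen_ne_zero_of_dual {F : Type*} [AddCommGroup F] [Module K F] {u : (ι → K) → F}
    (hA : IsOpen A) (hu : ∀ φ : Module.Dual K F, IsRegularOn A fun a => φ (u a)) :
    IsOpen {a | a ∈ A ∧ u a ≠ 0} := by
  have hunion : {a | a ∈ A ∧ u a ≠ 0} = ⋃ φ : Module.Dual K F, {a | a ∈ A ∧ φ (u a) ≠ 0} := by
    ext a
    simp [← Module.forall_dual_apply_eq_zero_iff K (u a)]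
  rw [hunion]
  exact isOpen_iUnion fun φ => isOpen_ne_zero hA (hu φ)

lemma continuousOn {F : (ι → K) → (κ → K)} (hF : ∀ j, IsRegularOn A (fun a => F a j)) :
    ContinuousOn F A := by
  rw [continuousOn_iff_continuous_domRestrict]
  refine continuous_generateFrom_iff.2 ?_
  rintro _ ⟨p, rfl⟩
  have hp : IsRegularOn (Set.univ : Set (κ → K)) (fun x => MvPolynomial.eval x p) :=
    ⟨p, 1, fun a _ => by simp⟩
  obtain ⟨u, v, h⟩ := hp.comp hF (fun _ _ => trivial)
  have : A.domRestrict F ⁻¹' {x | MvPolynomial.eval x p ≠ 0}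
      = Subtype.val ⁻¹' {a | MvPolynomial.eval a u ≠ 0} := by
    ext ⟨a, ha⟩
    simp only [Set.mem_preimage, Set.domRestrict_apply, Set.mem_ofPred_eq]
    rw [← (h a ha).2]
    simp [(h a ha).1]
  rw [this]
  exact (zariskiTopology.isOpen_setOf_eval_ne_zero u).preimage continuous_subtype_val

end IsRegularOn

end RegularFunctions

namespace zariskiTopology

attribute [local instance] zariskiTopology

variable {ι K : Type} [Field K]

lemma isClosed_pi_singleton (s : Set ι) (x : ι → K) : IsClosed (s.pi fun i => {x i}) := by
  rw [Set.pi_def]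
  refine isClosed_biInter fun i _ => isOpen_compl_iff.1 ?_
  convert isOpen_setOf_eval_ne_zero (MvPolynomial.X i - MvPolynomial.C (x i)) using 1
  ext y
  simp [sub_eq_zero]

theorem t1Space : T1Space (ι → K) :=
  ⟨fun x => by simpa [Set.univ_pi_singleton] using isClosed_pi_singleton Set.univ x⟩

lemma isIrreducible_pi_singleton [Infinite K] (s : Set ι) (x : ι → K) :
    IsIrreducible (s.pi fun i => {x i}) := by
  classical
  have := irreducibleSpace (ι := ι) (K := K)
  have hg : ContinuousOn (fun (y : ι → K) i => if i ∈ s then x i else y i) Set.univ := by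
    refine IsRegularOn.continuousOn fun i => ?_
    split_ifs
    exacts [.const _ _, .coord _ _]
  convert (IrreducibleSpace.isIrreducible_univ (ι → K)).image _ hg using 1
  ext y
  simp only [Set.mem_pi, Set.mem_singleton_iff, Set.image_univ, Set.mem_range]
  constructor
  · refine fun hy => ⟨y, funext fun i => ?_⟩
    split_ifs with hi
    exacts [(hy i hi).symm, rfl]
  · rintro ⟨z, rfl⟩ i hi
    exact if_pos hi

lemma isPrime_vanishingIdeal {C : Set (ι → K)} (hC : IsIrreducible C) :
    (MvPolynomial.vanishingIdeal K C).IsPrime := by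
  refine ⟨fun h => ?_, fun {p q} hpq => ?_⟩
  · obtain ⟨x, hx⟩ := hC.nonempty
    have h1 : (1 : MvPolynomial ι K) ∈ MvPolynomial.vanishingIdeal K C := h ▸ Submodule.mem_top
    simpa using MvPolynomial.mem_vanishingIdeal_iff.1 h1 x hx
  · by_contra! hcon
    simp only [MvPolynomial.mem_vanishingIdeal_iff, not_forall, MvPolynomial.aeval_eq_eval] at hcon
    obtain ⟨⟨x, hx, hpx⟩, ⟨y, hy, hqy⟩⟩ := hcon
    obtain ⟨z, hz, hpz, hqz⟩ := hC.2 _ _ (isOpen_setOf_eval_ne_zero p)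
      (isOpen_setOf_eval_ne_zero q) ⟨x, hx, hpx⟩ ⟨y, hy, hqy⟩
    exact mul_ne_zero hpz hqz (by simpa using MvPolynomial.mem_vanishingIdeal_iff.1 hpq z hz)

lemma vanishingIdeal_le_vanishingIdeal_iff {C D : Set (ι → K)} (hD : IsClosed D) :
    MvPolynomial.vanishingIdeal K D ≤ MvPolynomial.vanishingIdeal K C ↔ C ⊆ D := by
  refine ⟨fun h x hx => ?_, MvPolynomial.vanishingIdeal_anti_mono⟩
  by_contra hxD
  obtain ⟨p, hpx, hpD⟩ := exists_eval_ne_zero_of_mem_isOpen hD.isOpen_compl hxD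
  have hp : p ∈ MvPolynomial.vanishingIdeal K D :=
    MvPolynomial.mem_vanishingIdeal_iff.2 fun y hy => not_not.1 fun hpy => hpD y hpy hy
  exact hpx (by simpa using MvPolynomial.mem_vanishingIdeal_iff.1 (h hp) x hx)

section Dimension

variable [Fintype ι]

lemma topologicalKrullDim_le_card : topologicalKrullDim (ι → K) ≤ (Fintype.card ι : ℕ) := by
  let I : TopologicalSpace.IrreducibleCloseds (ι → K) → (PrimeSpectrum (MvPolynomial ι K))ᵒᵈ :=
    fun C => OrderDual.toDual ⟨_, isPrime_vanishingIdeal C.isIrreducible⟩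
  have hI : StrictMono I :=
    strictMono_of_le_iff_le fun C D => (vanishingIdeal_le_vanishingIdeal_iff D.isClosed).symm
  calc topologicalKrullDim (ι → K)
      ≤ Order.krullDim (PrimeSpectrum (MvPolynomial ι K))ᵒᵈ := Order.krullDim_le_of_strictMono I hI
    _ = ringKrullDim (MvPolynomial ι K) := Order.krullDim_orderDual
    _ = (Fintype.card ι : ℕ) := by
      rw [MvPolynomial.ringKrullDim_of_isNoetherianRing, ringKrullDim_eq_zero_of_field]
      simp

lemma exists_strictMono_irreducibleCloseds [Infinite K] (x : ι → K) :
    ∃ C : Fin (Fintype.card ι + 1) → TopologicalSpace.IrreducibleCloseds (ι → K),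
      StrictMono C ∧ (C 0 : Set (ι → K)) = {x} := by
  classical
  let e := Fintype.equivFin ι
  let s : Fin (Fintype.card ι + 1) → Set ι := fun k => {i | (k : ℕ) ≤ e i}
  refine ⟨fun k => ⟨(s k).pi fun i => {x i}, isIrreducible_pi_singleton _ x,
    isClosed_pi_singleton _ x⟩, Fin.strictMono_iff_lt_succ.2 fun k => ?_, ?_⟩
  · have hsub : s k.succ ⊆ s k.castSucc := fun i (hi : (k : ℕ) + 1 ≤ e i) => Nat.le_of_succ_le hi
    have hk : e.symm k ∉ s k.succ := by simp [s]
    refine lt_of_le_not_ge (Set.pi_mono' (fun _ _ => subset_rfl) hsub) fun h => ?_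
    have hmem : Function.update x (e.symm k) (x (e.symm k) + 1) ∈ (s k.succ).pi fun i => {x i} :=
      fun i hi => Function.update_of_ne (by rintro rfl; exact hk hi) _ _
    simpa using h hmem (e.symm k) (by simp [s])
  · simp [s, ← Set.univ_pi_singleton]

theorem topologicalKrullDim_of_isOpen [Infinite K] {V : Set (ι → K)} (hV : IsOpen V)
    (hne : V.Nonempty) : topologicalKrullDim V = (Fintype.card ι : ℕ) := by
  refine le_antisymm ((topologicalKrullDim_subspace_le _ V).trans topologicalKrullDim_le_card) ?_
  obtain ⟨x, hx⟩ := hne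
  obtain ⟨C, hC, hC0⟩ := exists_strictMono_irreducibleCloseds x
  have := t1Space (ι := ι) (K := K)
  let Z : TopologicalSpace.IrreducibleCloseds V :=
    ⟨{⟨x, hx⟩}, isIrreducible_singleton, isClosed_singleton⟩
  have hZ : TopologicalSpace.IrreducibleCloseds.map Subtype.val
      hV.isOpenEmbedding_subtypeVal.continuous Z = C 0 :=
    SetLike.coe_injective (by simp [Z, hC0])
  have hcoheight : (Fintype.card ι : ℕ∞) ≤ Order.coheight Z := by
    rw [← Topology.IsOpenEmbedding.coheight_map hV.isOpenEmbedding_subtypeVal Z, hZ]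
    exact Order.length_le_coheight_head
      (p := ⟨Fintype.card ι, C, fun i => hC Fin.castSucc_lt_succ⟩)
  exact (WithBot.coe_le_coe.2 hcoheight).trans (Order.coheight_le_krullDim Z)

theorem topologicalKrullDim_eq_card [Infinite K] :
    topologicalKrullDim (ι → K) = (Fintype.card ι : ℕ) :=
  (IsHomeomorph.topologicalKrullDim_eq _ (Homeomorph.Set.univ (ι → K)).isHomeomorph).symm.trans
    (topologicalKrullDim_of_isOpen isOpen_univ Set.univ_nonempty)

end Dimension

end zariskiTopology

lemma topologicalKrullDim_le_of_forall_exists_isOpen {X : Type*} [TopologicalSpace X]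
    {n : WithBot ℕ∞}
    (h : ∀ x : X, ∃ V : Set X, IsOpen V ∧ x ∈ V ∧ topologicalKrullDim V ≤ n) :
    topologicalKrullDim X ≤ n := by
  rcases isEmpty_or_nonempty (TopologicalSpace.IrreducibleCloseds X) with hX | hX
  · simp [topologicalKrullDim, Order.krullDim_eq_bot]
  rw [topologicalKrullDim, Order.krullDim_eq_iSup_coheight_of_nonempty,
    WithBot.coe_iSup (OrderTop.bddAbove _)]
  refine iSup_le fun Z => ?_
  obtain ⟨x, hxZ⟩ := Z.isIrreducible.nonempty
  obtain ⟨V, hV, hxV, hn⟩ := h x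
  have hemb := hV.isOpenEmbedding_subtypeVal
  let e := TopologicalSpace.IrreducibleCloseds.orderIsoOfIsOpenEmbedding _ hemb
  let Z' := e.symm ⟨Z, ⟨⟨x, hxV⟩, hxZ⟩⟩
  have hZ' : TopologicalSpace.IrreducibleCloseds.map _ hemb.continuous Z' = Z :=
    congrArg Subtype.val (e.apply_symm_apply ⟨Z, ⟨⟨x, hxV⟩, hxZ⟩⟩)
  rw [← hZ', hemb.coheight_map]
  exact (Order.coheight_le_krullDim Z').trans hn

/-! ### Representations as operators on the total space -/

namespace QuiverData

section Operators

variable (Q : QuiverData) (d : Fin Q.n → ℕ) (K : Type) [Field K]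

/-- The algebra of linear endomorphisms of the carrier space `⊕ᵢ K^{dᵢ}`; all operators attached
to `d`-dimensional representations live in it. -/
abbrev CarrierEnd := Module.End K (Carrier Q d K)

variable {Q d K}

/-- `proj`, as an element of the ring `CarrierEnd Q d K`. -/
abbrev vertexIdem (i : Fin Q.n) : CarrierEnd Q d K := proj Q d K i

/-- `arrowMap`, as an element of the ring `CarrierEnd Q d K`. -/
noncomputable abbrev arrowEnd (x : RepSpace Q d K) (a : Fin Q.numArrows) : CarrierEnd Q d K :=
  arrowMap Q d K x a

lemma vertexIdem_apply (i : Fin Q.n) (m : Carrier Q d K) (j) :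
    (vertexIdem i : CarrierEnd Q d K) m j = if j.1 = i then m j else 0 := rfl

lemma vertexIdem_single (i : Fin Q.n) (j : Σ i, Fin (d i)) :
    (vertexIdem i : CarrierEnd Q d K) (Pi.single j 1) = if j.1 = i then Pi.single j 1 else 0 := by
  funext k
  rw [vertexIdem_apply]
  obtain rfl | hk := eq_or_ne k j
  · split_ifs <;> rfl
  · split_ifs <;> simp [hk]

lemma arrowEnd_apply (x : RepSpace Q d K) (a) (m : Carrier Q d K) (j) :
    arrowEnd x a m j = if h : j.1 = Q.tgt a then
      ∑ w : Fin (d (Q.src a)), x ⟨a, (Fin.cast (congrArg d h) j.2, w)⟩ * m ⟨Q.src a, w⟩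
    else 0 := rfl

lemma completeOrthogonalIdempotents_vertexIdem :
    CompleteOrthogonalIdempotents (vertexIdem : Fin Q.n → CarrierEnd Q d K) where
  idem i := LinearMap.ext fun m => funext fun k => by
    simp only [Module.End.mul_apply, vertexIdem_apply]
    split_ifs <;> rfl
  ortho i j hij := LinearMap.ext fun m => funext fun k => by
    simp only [Module.End.mul_apply, vertexIdem_apply]
    split_ifs with hi hj
    exacts [absurd (hi.symm.trans hj) hij, rfl, rfl]
  complete := LinearMap.ext fun m => funext fun k => by
    simp [LinearMap.sum_apply, Finset.sum_apply, vertexIdem_apply]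

lemma vertexIdem_mul_arrowEnd (x : RepSpace Q d K) (a) :
    vertexIdem (Q.tgt a) * arrowEnd x a = arrowEnd x a :=
  LinearMap.ext fun m => funext fun k => by
    simp only [Module.End.mul_apply, vertexIdem_apply, arrowEnd_apply]
    split_ifs <;> rfl

lemma arrowEnd_mul_vertexIdem (x : RepSpace Q d K) (a) :
    arrowEnd x a * vertexIdem (Q.src a) = arrowEnd x a :=
  LinearMap.ext fun m => funext fun k => by
    simp [Module.End.mul_apply, vertexIdem_apply, arrowEnd_apply]

variable (Q d K) in
/-- The space of families `(z_a)` of operators in which `z_a` maps the component of the source of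
`a` to that of its target; it is `RepSpace Q d K` in operator form. -/
def arrowSpace : Submodule K (Fin Q.numArrows → CarrierEnd Q d K) where
  carrier := {z | ∀ a, vertexIdem (Q.tgt a) * z a * vertexIdem (Q.src a) = z a}
  add_mem' hz hz' a := by simp only [Pi.add_apply, mul_add, add_mul, hz a, hz' a]
  zero_mem' a := by simp
  smul_mem' c z hz a := by simp only [Pi.smul_apply, mul_smul_comm, smul_mul_assoc, hz a]

variable (Q d K) in
/-- A representation as the family of its arrow operators. -/
noncomputable def arrowFamily : RepSpace Q d K →ₗ[K] Fin Q.numArrows → CarrierEnd Q d K where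
  toFun := arrowEnd
  map_add' x y := funext fun a => LinearMap.ext fun m => funext fun k => by
    simp only [Pi.add_apply, LinearMap.add_apply, arrowEnd_apply]
    split_ifs <;> simp [add_mul, Finset.sum_add_distrib]
  map_smul' c x := funext fun a => LinearMap.ext fun m => funext fun k => by
    simp only [Pi.smul_apply, LinearMap.smul_apply, arrowEnd_apply, RingHom.id_apply]
    split_ifs <;> simp [Finset.mul_sum, mul_assoc]

lemma arrowFamily_apply (x : RepSpace Q d K) (a) : arrowFamily Q d K x a = arrowEnd x a := rfl

variable (Q d K) in
/-- The matrix entries of a family of operators; inverse to `arrowFamily` on `arrowSpace`. -/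
noncomputable def coordsOfFamily :
    (Fin Q.numArrows → CarrierEnd Q d K) →ₗ[K] RepSpace Q d K where
  toFun z c := z c.1 (Pi.single ⟨Q.src c.1, c.2.2⟩ 1) ⟨Q.tgt c.1, c.2.1⟩
  map_add' z z' := by funext c; simp
  map_smul' r z := by funext c; simp

lemma coordsOfFamily_apply (z : Fin Q.numArrows → CarrierEnd Q d K) (c : Coords Q d) :
    coordsOfFamily Q d K z c = z c.1 (Pi.single ⟨Q.src c.1, c.2.2⟩ 1) ⟨Q.tgt c.1, c.2.1⟩ := rfl

lemma coordsOfFamily_arrowFamily (x : RepSpace Q d K) :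
    coordsOfFamily Q d K (arrowFamily Q d K x) = x := by
  funext ⟨a, v, w⟩
  rw [coordsOfFamily_apply, arrowFamily_apply, arrowEnd_apply, dif_pos rfl,
    Finset.sum_eq_single w (fun b _ hb => by rw [Pi.single_eq_of_ne (by simpa using hb), mul_zero])
      (by simp)]
  simp

lemma arrowFamily_mem (x : RepSpace Q d K) : arrowFamily Q d K x ∈ arrowSpace Q d K := fun a => by
  rw [arrowFamily_apply, vertexIdem_mul_arrowEnd, arrowEnd_mul_vertexIdem]

lemma arrowFamily_coordsOfFamily {z : Fin Q.numArrows → CarrierEnd Q d K}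
    (hz : z ∈ arrowSpace Q d K) : arrowFamily Q d K (coordsOfFamily Q d K z) = z := by
  funext a
  rw [← arrowFamily_mem _ a, ← hz a]
  refine (Pi.basisFun K _).ext fun ⟨k, w⟩ => funext fun ⟨j, v⟩ => ?_
  simp only [Pi.basisFun_apply, Module.End.mul_apply, vertexIdem_single]
  split_ifs with hk
  · subst hk
    simp only [vertexIdem_apply]
    split_ifs with hj
    · subst hj
      exact congrFun (coordsOfFamily_arrowFamily (coordsOfFamily Q d K z)) ⟨a, v, w⟩
    · rfl
  · simp

lemma finrank_arrowSpace :
    Module.finrank K (arrowSpace Q d K) = Fintype.card (Coords Q d) := by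
  let e : RepSpace Q d K ≃ₗ[K] arrowSpace Q d K :=
    { (arrowFamily Q d K).codRestrict (arrowSpace Q d K) arrowFamily_mem with
      invFun := fun z => coordsOfFamily Q d K z
      left_inv := coordsOfFamily_arrowFamily
      right_inv := fun z => Subtype.ext (arrowFamily_coordsOfFamily z.2) }
  rw [← e.finrank_eq, Module.finrank_fintype_fun_eq_card]

variable (Q d K) in
/-- The algebra `∏ᵢ End(K^{dᵢ})` of vertex-graded operators; its unit group is `GL(d)`. -/
def gradedEnd : Subalgebra K (CarrierEnd Q d K) :=
  Subalgebra.centralizer K (Set.range vertexIdem)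

lemma mem_gradedEnd {g : CarrierEnd Q d K} :
    g ∈ gradedEnd Q d K ↔ ∀ i, g * vertexIdem i = vertexIdem i * g := by
  simp [gradedEnd, Subalgebra.mem_centralizer_iff, eq_comm]

lemma mul_mul_mem_arrowSpace {g h : CarrierEnd Q d K} (hg : g ∈ gradedEnd Q d K)
    (hh : h ∈ gradedEnd Q d K) {z : Fin Q.numArrows → CarrierEnd Q d K}
    (hz : z ∈ arrowSpace Q d K) : (fun a => g * z a * h) ∈ arrowSpace Q d K := fun a => by
  rw [mem_gradedEnd] at hg hh
  calc vertexIdem (Q.tgt a) * (g * z a * h) * vertexIdem (Q.src a)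
      = vertexIdem (Q.tgt a) * g * z a * (h * vertexIdem (Q.src a)) := by simp only [mul_assoc]
    _ = g * (vertexIdem (Q.tgt a) * z a * vertexIdem (Q.src a)) * h := by
      rw [← hg, hh]; simp only [mul_assoc]
    _ = g * z a * h := by rw [hz a]

/-- The linear map `g ↦ (g X_a - Y_a g)_a` measuring the failure of `g` to be a homomorphism
`M_x → M_y`; for `x = y` it is the differential of the orbit map at `1`, up to sign. -/
noncomputable def homDefect (x y : RepSpace Q d K) :
    CarrierEnd Q d K →ₗ[K] Fin Q.numArrows → CarrierEnd Q d K :=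
  LinearMap.pi fun a => LinearMap.mulRight K (arrowEnd x a) - LinearMap.mulLeft K (arrowEnd y a)

lemma homDefect_apply (x y : RepSpace Q d K) (g : CarrierEnd Q d K) (a) :
    homDefect x y g a = g * arrowEnd x a - arrowEnd y a * g := rfl

lemma homDefect_eq_zero_iff {x y : RepSpace Q d K} {g : CarrierEnd Q d K} :
    homDefect x y g = 0 ↔ ∀ a, g * arrowEnd x a = arrowEnd y a * g := by
  simp only [funext_iff, homDefect_apply, Pi.zero_apply, sub_eq_zero]

lemma homDefect_mem_arrowSpace (x y : RepSpace Q d K) {g : CarrierEnd Q d K}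
    (hg : g ∈ gradedEnd Q d K) : homDefect x y g ∈ arrowSpace Q d K := by
  have hleft := mul_mul_mem_arrowSpace hg (one_mem _) (arrowFamily_mem x)
  have hright := mul_mul_mem_arrowSpace (one_mem _) hg (arrowFamily_mem y)
  simp only [mul_one, one_mul] at hleft hright
  exact sub_mem hleft hright

lemma mem_orbitSet_iff {x y : RepSpace Q d K} :
    y ∈ orbitSet Q d K x ↔ ∃ g ∈ gradedEnd Q d K, IsUnit g ∧ homDefect x y g = 0 := by
  simp only [mem_gradedEnd, homDefect_eq_zero_iff]
  constructor
  · rintro ⟨φ, harrow, hvertex⟩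
    exact ⟨φ.toLinearMap, fun i => LinearMap.ext (hvertex i),
      (Module.End.isUnit_iff _).2 φ.bijective, fun a => LinearMap.ext (harrow a)⟩
  · rintro ⟨g, hvertex, hu, harrow⟩
    exact ⟨LinearEquiv.ofBijective g ((Module.End.isUnit_iff _).1 hu),
      fun a => LinearMap.congr_fun (harrow a), fun i => LinearMap.congr_fun (hvertex i)⟩

lemma IsoRep.refl (x : RepSpace Q d K) : IsoRep Q d K x x :=
  ⟨LinearEquiv.refl K _, fun _ _ => rfl, fun _ _ => rfl⟩

lemma IsoRep.symm {x y : RepSpace Q d K} : IsoRep Q d K x y → IsoRep Q d K y x := by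
  rintro ⟨φ, harrow, hvertex⟩
  exact ⟨φ.symm, fun a m => by simp [LinearEquiv.symm_apply_eq, harrow],
    fun i m => by simp [LinearEquiv.symm_apply_eq, hvertex]⟩

lemma IsoRep.trans {x y z : RepSpace Q d K} :
    IsoRep Q d K x y → IsoRep Q d K y z → IsoRep Q d K x z := by
  rintro ⟨φ, harrow, hvertex⟩ ⟨ψ, harrow', hvertex'⟩
  exact ⟨φ.trans ψ, fun a m => by simp [harrow, harrow'], fun i m => by simp [hvertex, hvertex']⟩

lemma orbitSet_eq_of_mem {x y : RepSpace Q d K} (h : y ∈ orbitSet Q d K x) :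
    orbitSet Q d K y = orbitSet Q d K x :=
  Set.ext fun _ => ⟨IsoRep.trans h, IsoRep.trans (IsoRep.symm h)⟩

/-- The tangent space `{(g X_a - X_a g)_a}` of the orbit of `x` at `x`. -/
noncomputable def tangentSpace (x : RepSpace Q d K) :
    Submodule K (Fin Q.numArrows → CarrierEnd Q d K) :=
  (Subalgebra.toSubmodule (gradedEnd Q d K)).map (homDefect x x)

lemma tangentSpace_le_arrowSpace (x : RepSpace Q d K) :
    tangentSpace x ≤ arrowSpace Q d K := by
  rintro _ ⟨g, hg, rfl⟩
  exact homDefect_mem_arrowSpace x x hg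

/-- The dimension of the tangent space of the orbit of `x`, which turns out to be the dimension
of the orbit. -/
noncomputable def orbitRank (x : RepSpace Q d K) : ℕ := Module.finrank K (tangentSpace x)

end Operators

end QuiverData

section LinearAlgebra

variable {K E F α : Type*} [Field K] [AddCommGroup E] [Module K E] [AddCommGroup F] [Module K F]

lemma exists_dual_of_linearIndependent [Finite α] [DecidableEq α] {v : α → F}
    (hv : LinearIndependent K v) : ∃ R : F →ₗ[K] α → K, ∀ j, R (v j) = Pi.single j 1 := by
  cases nonempty_fintype α
  have hker : LinearMap.ker (Fintype.linearCombination K v) = ⊥ :=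
    LinearMap.ker_eq_bot'.2 fun w hw => funext (Fintype.linearIndependent_iff.1 hv w hw)
  obtain ⟨R, hR⟩ := LinearMap.exists_leftInverse_of_injective _ hker
  exact ⟨R, fun j => by simpa using LinearMap.congr_fun hR (Pi.single j 1)⟩

lemma exists_linearIndependent_map [FiniteDimensional K F] (T : E →ₗ[K] F) (G : Submodule K E) :
    ∃ b : Fin (Module.finrank K (G.map T)) → E, (∀ j, b j ∈ G) ∧
      LinearIndependent K fun j => T (b j) := by
  let β := Module.finBasis K (G.map T)
  choose b hbG hbβ using fun j => (β j).2
  refine ⟨b, hbG, ?_⟩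
  rw [funext hbβ]
  exact β.linearIndependent.map' (G.map T).subtype (Submodule.ker_subtype _)

lemma disjoint_ker_of_linearIndependent_comp [FiniteDimensional K F] [Fintype α]
    {S : Submodule K F} (R : F →ₗ[K] E) {u : α → F} (hu : ∀ j, u j ∈ S)
    (hR : LinearIndependent K fun j => R (u j)) (hS : Module.finrank K S ≤ Fintype.card α) :
    Disjoint S (LinearMap.ker R) := by
  have hspan : Submodule.span K (Set.range u) = S := by
    refine Submodule.eq_of_le_of_finrank_le ?_ ?_
    · exact Submodule.span_le.2 (Set.range_subset_iff.2 hu)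
    · rwa [finrank_span_eq_card (hR.of_comp R)]
  refine Submodule.disjoint_def.2 fun z hzS hzR => ?_
  rw [← hspan] at hzS
  obtain ⟨w, rfl⟩ := (Submodule.mem_span_range_iff_exists_fun K).1 hzS
  have hw : ∑ j, w j • R (u j) = 0 := by simpa using hzR
  exact Finset.sum_eq_zero fun j _ => by rw [Fintype.linearIndependent_iff.1 hR w hw j, zero_smul]

lemma isUnit_iff_det_toMatrix'_ne_zero [Fintype α] [DecidableEq α]
    {g : Module.End K (α → K)} : IsUnit g ↔ (LinearMap.toMatrix' g).det ≠ 0 := by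
  rw [LinearMap.det_toMatrix', LinearMap.isUnit_iff_isUnit_det, isUnit_iff_ne_zero]

lemma toMatrix'_ringInverse [Fintype α] [DecidableEq α] {g : Module.End K (α → K)}
    (hg : IsUnit g) :
    LinearMap.toMatrix' (Ring.inverse g) = (LinearMap.toMatrix' g)⁻¹ := by
  refine (Matrix.inv_eq_left_inv ?_).symm
  rw [← LinearMap.toMatrix'_mul, Ring.inverse_mul_cancel g hg, LinearMap.toMatrix'_one]

end LinearAlgebra

lemma topologicalKrullDim_eq_of_continuousOn {X Y : Type*} [TopologicalSpace X]
    [TopologicalSpace Y] {A : Set X} {B : Set Y} {f : X → Y} {g : Y → X}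
    (hf : ContinuousOn f A) (hg : ContinuousOn g B) (hfA : Set.MapsTo f A B)
    (hgB : Set.MapsTo g B A) (h : Set.InvOn g f A B) :
    topologicalKrullDim A = topologicalKrullDim B := by
  let e : A ≃ₜ B :=
    { toFun := hfA.restrict
      invFun := hgB.restrict
      left_inv := fun a => Subtype.ext (h.1 a.2)
      right_inv := fun b => Subtype.ext (h.2 b.2)
      continuous_toFun := hf.mapsToRestrict hfA
      continuous_invFun := hg.mapsToRestrict hgB }
  exact e.isHomeomorph.topologicalKrullDim_eq

namespace QuiverData

variable {Q : QuiverData} {d : Fin Q.n → ℕ} {K : Type} [Field K]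

lemma ringInverse_mem_gradedEnd {g : CarrierEnd Q d K} (hg : g ∈ gradedEnd Q d K)
    (hu : IsUnit g) : Ring.inverse g ∈ gradedEnd Q d K := by
  obtain ⟨u, rfl⟩ := hu
  rw [Ring.inverse_unit]
  exact mem_gradedEnd.2 fun i => Commute.units_inv_left (mem_gradedEnd.1 hg i)

/-- The representation `(g X_a g⁻¹)_a`, for a graded automorphism `g`. -/
noncomputable def conj (x : RepSpace Q d K) (g : CarrierEnd Q d K) : RepSpace Q d K :=
  coordsOfFamily Q d K fun a => g * arrowEnd x a * Ring.inverse g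

lemma arrowEnd_conj (x : RepSpace Q d K) {g : CarrierEnd Q d K} (hg : g ∈ gradedEnd Q d K)
    (hu : IsUnit g) (a) : arrowEnd (conj x g) a = g * arrowEnd x a * Ring.inverse g :=
  congrFun (arrowFamily_coordsOfFamily
    (mul_mul_mem_arrowSpace hg (ringInverse_mem_gradedEnd hg hu) (arrowFamily_mem x))) a

lemma homDefect_conj (x : RepSpace Q d K) {g : CarrierEnd Q d K} (hg : g ∈ gradedEnd Q d K)
    (hu : IsUnit g) : homDefect x (conj x g) g = 0 :=
  homDefect_eq_zero_iff.2 fun a => by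
    rw [arrowEnd_conj x hg hu, mul_assoc, Ring.inverse_mul_cancel g hu, mul_one]

lemma conj_eq_of_homDefect_eq_zero {x y : RepSpace Q d K} {g : CarrierEnd Q d K}
    (hu : IsUnit g) (h : homDefect x y g = 0) : conj x g = y := by
  rw [← coordsOfFamily_arrowFamily y, conj]
  congr 1
  funext a
  rw [homDefect_eq_zero_iff.1 h a, mul_assoc, Ring.mul_inverse_cancel g hu, mul_one]
  rfl

lemma isRegularOn_conj {κ : Type} {A : Set (κ → K)} (x : RepSpace Q d K)
    {g : (κ → K) → CarrierEnd Q d K}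
    (hg : ∀ i j, IsRegularOn A fun w => LinearMap.toMatrix' (g w) i j)
    (hu : ∀ w ∈ A, IsUnit (g w)) (c : Coords Q d) : IsRegularOn A fun w => conj x (g w) c := by
  have hinv : ∀ i j, IsRegularOn A fun w => (LinearMap.toMatrix' (g w))⁻¹ i j :=
    .matrix_inv hg fun w hw => isUnit_iff_det_toMatrix'_ne_zero.1 (hu w hw)
  have hmul : ∀ i j, IsRegularOn A fun w =>
      (LinearMap.toMatrix' (g w) * LinearMap.toMatrix' (arrowEnd x c.1)) i j :=
    .matrix_mul (N := fun _ => LinearMap.toMatrix' (arrowEnd x c.1)) hg fun _ _ => .const A _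
  refine (IsRegularOn.matrix_mul hmul hinv ⟨Q.tgt c.1, c.2.1⟩ ⟨Q.src c.1, c.2.2⟩).congr
    fun w hw => ?_
  change (LinearMap.toMatrix' (g w) * LinearMap.toMatrix' (arrowEnd x c.1) *
    (LinearMap.toMatrix' (g w))⁻¹) _ _ = _
  rw [← toMatrix'_ringInverse (hu w hw), ← LinearMap.toMatrix'_mul, ← LinearMap.toMatrix'_mul]
  exact LinearMap.toMatrix'_apply _ _ _

lemma isRegularOn_homDefect {A : Set (RepSpace Q d K)} (x : RepSpace Q d K)
    (g : CarrierEnd Q d K) (φ : Module.Dual K (Fin Q.numArrows → CarrierEnd Q d K)) :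
    IsRegularOn A fun y => φ (homDefect x y g) := by
  let mulG : (Fin Q.numArrows → CarrierEnd Q d K) →ₗ[K] Fin Q.numArrows → CarrierEnd Q d K :=
    LinearMap.pi fun a => LinearMap.mulRight K g ∘ₗ LinearMap.proj a
  have h : (fun y => φ (homDefect x y g)) =
      fun y => φ (fun a => g * arrowEnd x a) - (φ ∘ₗ mulG ∘ₗ arrowFamily Q d K) y := by
    funext y
    rw [LinearMap.comp_apply, ← map_sub]
    rfl
  rw [h]
  exact (IsRegularOn.const A _).sub (IsRegularOn.linearMap A _)

lemma finrank_map_homDefect_le {x y : RepSpace Q d K} (hy : y ∈ orbitSet Q d K x) :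
    Module.finrank K ((Subalgebra.toSubmodule (gradedEnd Q d K)).map (homDefect x y)) ≤
      orbitRank x := by
  obtain ⟨g, hg, hu, hxy⟩ := mem_orbitSet_iff.1 hy
  let mulG : (Fin Q.numArrows → CarrierEnd Q d K) →ₗ[K] Fin Q.numArrows → CarrierEnd Q d K :=
    LinearMap.pi fun a => LinearMap.mulLeft K g ∘ₗ LinearMap.proj a
  have hle : (Subalgebra.toSubmodule (gradedEnd Q d K)).map (homDefect x y) ≤
      (tangentSpace x).map mulG := by
    rintro _ ⟨h, hh, rfl⟩
    have hmem : Ring.inverse g * h ∈ gradedEnd Q d K := mul_mem (ringInverse_mem_gradedEnd hg hu) hh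
    refine ⟨_, ⟨Ring.inverse g * h, hmem, rfl⟩, funext fun a => ?_⟩
    change g * (Ring.inverse g * h * arrowEnd x a - arrowEnd x a * (Ring.inverse g * h)) =
      h * arrowEnd x a - arrowEnd y a * h
    rw [mul_sub, ← mul_assoc g (arrowEnd x a), homDefect_eq_zero_iff.1 hxy a]
    simp only [mul_assoc, Ring.mul_inverse_cancel_left g _ hu]
  exact (Submodule.finrank_mono hle).trans (Submodule.finrank_map_le _ _)

end QuiverData

/-! ### Slices of orbits -/

namespace QuiverData

variable {Q : QuiverData} {d : Fin Q.n → ℕ} {K : Type} [Field K]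

/-- Data for a local parametrisation of the orbit of `x` near `x`: graded operators `gen j` whose
images under `homDefect x x` form a basis of the tangent space, with a dual family of coordinates
on the ambient space. -/
structure OrbitSlice (x : RepSpace Q d K) where
  gen : Fin (orbitRank x) → CarrierEnd Q d K
  gen_mem : ∀ j, gen j ∈ gradedEnd Q d K
  coord : (Fin Q.numArrows → CarrierEnd Q d K) →ₗ[K] Fin (orbitRank x) → K
  coord_gen : ∀ j, coord (homDefect x x (gen j)) = Pi.single j 1

instance (x : RepSpace Q d K) : Nonempty (OrbitSlice x) := by
  obtain ⟨b, hb, hli⟩ := exists_linearIndependent_map (homDefect x x)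
    (Subalgebra.toSubmodule (gradedEnd Q d K))
  obtain ⟨R, hR⟩ := exists_dual_of_linearIndependent hli
  exact ⟨⟨b, hb, R, hR⟩⟩

lemma homDefect_self_one (x : RepSpace Q d K) : homDefect x x 1 = 0 :=
  homDefect_eq_zero_iff.2 fun a => by simp

namespace OrbitSlice

attribute [local instance] zariskiTopology

variable {x : RepSpace Q d K} (σ : OrbitSlice x)

/-- The matrix of `w ↦ ∑ j, w j • gen j` followed by `homDefect x y`, in the coordinates of the
slice. -/
noncomputable def matrix (y : RepSpace Q d K) :
    Matrix (Fin (orbitRank x)) (Fin (orbitRank x)) K :=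
  .of fun i j => σ.coord (homDefect x y (σ.gen j)) i

/-- The affine-linear family of graded operators through `1` in the directions `gen j`. -/
noncomputable def group (w : Fin (orbitRank x) → K) : CarrierEnd Q d K :=
  1 + ∑ j, w j • σ.gen j

/-- The parameter `w` for which `group w` solves the coordinates of the equation
`homDefect x y (group w) = 0`. -/
noncomputable def params (y : RepSpace Q d K) : Fin (orbitRank x) → K :=
  (σ.matrix y)⁻¹.mulVec (-σ.coord (homDefect x y 1))

/-- The point of the orbit with parameter `w`. -/
noncomputable def point (w : Fin (orbitRank x) → K) : RepSpace Q d K := conj x (σ.group w)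

/-- The open neighbourhood of `x` on which the orbit is parametrised. -/
def domain : Set (RepSpace Q d K) :=
  {y | (σ.matrix y).det ≠ 0 ∧ IsUnit (σ.group (σ.params y))}

/-- The open set of parameters of the points of the orbit in `domain`. -/
def paramDomain : Set (Fin (orbitRank x) → K) :=
  {w | IsUnit (σ.group w) ∧ (σ.matrix (σ.point w)).det ≠ 0}

lemma group_mem (w : Fin (orbitRank x) → K) : σ.group w ∈ gradedEnd Q d K :=
  add_mem (one_mem _) (sum_mem fun j _ => (gradedEnd Q d K).smul_mem (σ.gen_mem j) (w j))

lemma coord_homDefect_group (y : RepSpace Q d K) (w : Fin (orbitRank x) → K) :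
    σ.coord (homDefect x y (σ.group w)) =
      σ.coord (homDefect x y 1) + (σ.matrix y).mulVec w := by
  funext i
  simp only [group, matrix, map_add, map_sum, map_smul, Matrix.mulVec, dotProduct, Pi.add_apply,
    Finset.sum_apply, Pi.smul_apply, smul_eq_mul, Matrix.of_apply, mul_comm]

lemma params_eq_iff {y : RepSpace Q d K} (hy : (σ.matrix y).det ≠ 0)
    {w : Fin (orbitRank x) → K} :
    σ.params y = w ↔ σ.coord (homDefect x y (σ.group w)) = 0 := by
  have hu : IsUnit (σ.matrix y).det := isUnit_iff_ne_zero.2 hy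
  rw [coord_homDefect_group, add_comm, ← eq_neg_iff_add_eq_zero, params]
  constructor
  · rintro rfl
    rw [Matrix.mulVec_mulVec, Matrix.mul_nonsing_inv _ hu, Matrix.one_mulVec]
  · intro h
    rw [← h, Matrix.mulVec_mulVec, Matrix.nonsing_inv_mul _ hu, Matrix.one_mulVec]

lemma matrix_self : σ.matrix x = 1 := by
  ext i j
  simp [matrix, σ.coord_gen, Matrix.one_apply, Pi.single_apply]

lemma group_zero : σ.group 0 = 1 := by simp [group]

lemma params_self : σ.params x = 0 :=
  (σ.params_eq_iff (by simp [matrix_self])).2 (by rw [group_zero, homDefect_self_one, map_zero])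

lemma point_zero : σ.point 0 = x :=
  conj_eq_of_homDefect_eq_zero (by simp [group_zero]) (by rw [group_zero, homDefect_self_one])

lemma self_mem_domain : x ∈ σ.domain := by
  simp [domain, matrix_self, params_self, group_zero]

lemma zero_mem_paramDomain : 0 ∈ σ.paramDomain := by
  simp [paramDomain, point_zero, matrix_self, group_zero]

lemma homDefect_group_params_eq_zero {y : RepSpace Q d K} (hy : (σ.matrix y).det ≠ 0)
    (hrank : Module.finrank K ((Subalgebra.toSubmodule (gradedEnd Q d K)).map (homDefect x y)) ≤
      orbitRank x) :
    homDefect x y (σ.group (σ.params y)) = 0 := by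
  refine Submodule.disjoint_def.1 (disjoint_ker_of_linearIndependent_comp
    (S := (Subalgebra.toSubmodule (gradedEnd Q d K)).map (homDefect x y)) σ.coord
    (u := fun j => homDefect x y (σ.gen j)) (fun j => ⟨σ.gen j, σ.gen_mem j, rfl⟩) ?_
    (by simpa using hrank)) _ ⟨_, σ.group_mem _, rfl⟩ ((σ.params_eq_iff hy).1 rfl)
  exact Matrix.linearIndependent_cols_of_det_ne_zero (A := σ.matrix y) hy

lemma mem_orbitSet_iff_homDefect_eq_zero {y : RepSpace Q d K} (hy : y ∈ σ.domain) :
    y ∈ orbitSet Q d K x ↔ homDefect x y (σ.group (σ.params y)) = 0 :=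
  ⟨fun h => σ.homDefect_group_params_eq_zero hy.1 (finrank_map_homDefect_le h),
    fun h => mem_orbitSet_iff.2 ⟨_, σ.group_mem _, hy.2, h⟩⟩

lemma invOn_point_params :
    Set.InvOn σ.point σ.params (σ.domain ∩ orbitSet Q d K x) σ.paramDomain :=
  ⟨fun _ hy => conj_eq_of_homDefect_eq_zero hy.1.2
      ((σ.mem_orbitSet_iff_homDefect_eq_zero hy.1).1 hy.2),
    fun _ hw => (σ.params_eq_iff hw.2).2 (by
      rw [point, homDefect_conj x (σ.group_mem _) hw.1, map_zero])⟩

lemma mapsTo_params :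
    Set.MapsTo σ.params (σ.domain ∩ orbitSet Q d K x) σ.paramDomain := fun y hy =>
  ⟨hy.1.2, by rw [σ.invOn_point_params.1 hy]; exact hy.1.1⟩

lemma mapsTo_point :
    Set.MapsTo σ.point σ.paramDomain (σ.domain ∩ orbitSet Q d K x) := fun w hw =>
  ⟨⟨hw.2, by rw [σ.invOn_point_params.2 hw]; exact hw.1⟩,
    mem_orbitSet_iff.2 ⟨_, σ.group_mem w, hw.1, homDefect_conj x (σ.group_mem w) hw.1⟩⟩

lemma isRegularOn_matrix (A : Set (RepSpace Q d K)) (i j) :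
    IsRegularOn A fun y => σ.matrix y i j :=
  isRegularOn_homDefect x (σ.gen j) (LinearMap.proj i ∘ₗ σ.coord)

lemma isRegularOn_params (i) : IsRegularOn {y | (σ.matrix y).det ≠ 0} fun y => σ.params y i := by
  simp only [params, Matrix.mulVec, dotProduct]
  exact .sum _ fun j => .mul (.matrix_inv (σ.isRegularOn_matrix _) (fun _ hy => hy) i j)
    (isRegularOn_homDefect x 1 (LinearMap.proj j ∘ₗ σ.coord)).neg

lemma isRegularOn_group (A : Set (Fin (orbitRank x) → K)) (i j) :
    IsRegularOn A fun w => LinearMap.toMatrix' (σ.group w) i j := by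
  simp only [group, map_add, map_sum, map_smul, Matrix.add_apply, Matrix.sum_apply,
    Matrix.smul_apply, smul_eq_mul]
  exact (IsRegularOn.const A _).add (.sum _ fun k => (IsRegularOn.coord A k).mul (.const A _))

lemma isRegularOn_point (c) : IsRegularOn {w | IsUnit (σ.group w)} fun w => σ.point w c :=
  isRegularOn_conj x (σ.isRegularOn_group _) (fun _ hw => hw) c

lemma isOpen_det_matrix_ne_zero : IsOpen {y | (σ.matrix y).det ≠ 0} := by
  simpa using IsRegularOn.isOpen_ne_zero isOpen_univ (.det (σ.isRegularOn_matrix _))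

lemma isOpen_domain : IsOpen σ.domain := by
  simp only [domain, isUnit_iff_det_toMatrix'_ne_zero]
  exact IsRegularOn.isOpen_ne_zero σ.isOpen_det_matrix_ne_zero (.det fun i j =>
    (σ.isRegularOn_group Set.univ i j).comp σ.isRegularOn_params fun _ _ => trivial)

lemma isOpen_isUnit_group : IsOpen {w | IsUnit (σ.group w)} := by
  simpa [isUnit_iff_det_toMatrix'_ne_zero] using
    IsRegularOn.isOpen_ne_zero isOpen_univ (.det (σ.isRegularOn_group _))

lemma isOpen_paramDomain : IsOpen σ.paramDomain :=
  IsRegularOn.isOpen_ne_zero σ.isOpen_isUnit_group (.det fun i j =>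
    (σ.isRegularOn_matrix Set.univ i j).comp σ.isRegularOn_point fun _ _ => trivial)

theorem topologicalKrullDim_domain_inter_orbitSet [Infinite K] :
    topologicalKrullDim ↥(σ.domain ∩ orbitSet Q d K x) = orbitRank x := by
  have hparams : ContinuousOn σ.params (σ.domain ∩ orbitSet Q d K x) :=
    (IsRegularOn.continuousOn σ.isRegularOn_params).mono fun y hy => hy.1.1
  have hpoint : ContinuousOn σ.point σ.paramDomain :=
    (IsRegularOn.continuousOn σ.isRegularOn_point).mono fun w hw => hw.1
  rw [topologicalKrullDim_eq_of_continuousOn hparams hpoint σ.mapsTo_params σ.mapsTo_point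
      σ.invOn_point_params,
    zariskiTopology.topologicalKrullDim_of_isOpen σ.isOpen_paramDomain
      ⟨0, σ.zero_mem_paramDomain⟩, Fintype.card_fin]

lemma isOpen_domain_diff_orbitSet : IsOpen (σ.domain \ orbitSet Q d K x) := by
  have hreg (φ : Module.Dual K (Fin Q.numArrows → CarrierEnd Q d K)) :
      IsRegularOn σ.domain fun y => φ (homDefect x y (σ.group (σ.params y))) := by
    simp only [group, map_add, map_sum, map_smul, smul_eq_mul]
    exact (isRegularOn_homDefect x 1 φ).add (.sum _ fun j =>
      ((σ.isRegularOn_params j).mono fun y hy => hy.1).mul (isRegularOn_homDefect x (σ.gen j) φ))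
  have hset : σ.domain \ orbitSet Q d K x =
      {y | y ∈ σ.domain ∧ homDefect x y (σ.group (σ.params y)) ≠ 0} :=
    Set.ext fun y => and_congr_right fun hy => (σ.mem_orbitSet_iff_homDefect_eq_zero hy).not
  rw [hset]
  exact IsRegularOn.isOpen_ne_zero_of_dual σ.isOpen_domain hreg

lemma domain_subset_orbitSet_of_dense (h : Dense (orbitSet Q d K x)) :
    σ.domain ⊆ orbitSet Q d K x := by
  intro y hy
  by_contra hyO
  obtain ⟨z, hz, hzO⟩ := h.inter_open_nonempty _ σ.isOpen_domain_diff_orbitSet ⟨y, hy, hyO⟩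
  exact hz.2 hzO

lemma domain_subset_orbitSet_of_orbitRank_eq (h : orbitRank x = Fintype.card (Coords Q d)) :
    σ.domain ⊆ orbitSet Q d K x := by
  intro y hy
  have hle : (Subalgebra.toSubmodule (gradedEnd Q d K)).map (homDefect x y) ≤
      arrowSpace Q d K := Submodule.map_le_iff_le_comap.2 fun _ => homDefect_mem_arrowSpace x y
  refine (σ.mem_orbitSet_iff_homDefect_eq_zero hy).2 (σ.homDefect_group_params_eq_zero hy.1 ?_)
  rw [h, ← finrank_arrowSpace (Q := Q) (d := d) (K := K)]
  exact Submodule.finrank_mono hle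

end OrbitSlice

end QuiverData

/-! ### Orbits of maximal dimension -/

section Semicontinuity

attribute [local instance] zariskiTopology

variable {ι K : Type} [Field K]

lemma zariskiTopology.exists_ne_zero_add_smul_mem [Infinite K] {U : Set (ι → K)} (hU : IsOpen U)
    {x : ι → K} (hx : x ∈ U) (z : ι → K) : ∃ t : K, t ≠ 0 ∧ x + t • z ∈ U := by
  have := zariskiTopology.irreducibleSpace (ι := Unit) (K := K)
  have hline : Continuous fun w : Unit → K => x + w () • z :=
    continuousOn_univ.1 <| IsRegularOn.continuousOn fun i =>
      (IsRegularOn.const _ _).add ((IsRegularOn.coord _ ()).mul (.const _ (z i)))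
  have hne : IsOpen {w : Unit → K | w () ≠ 0} := by
    simpa using IsRegularOn.isOpen_ne_zero isOpen_univ (.coord Set.univ ())
  obtain ⟨w, hwU, hw⟩ := nonempty_preirreducible_inter (hU.preimage hline) hne
    ⟨0, by simpa using hx⟩ ⟨1, one_ne_zero⟩
  exact ⟨w (), hw, hwU⟩

lemma exists_isOpen_forall_linearIndependent {F α : Type*} [AddCommGroup F] [Module K F]
    [Finite α] {u : α → (ι → K) → F}
    (hu : ∀ (φ : Module.Dual K F) j, IsRegularOn Set.univ fun y => φ (u j y)) {x : ι → K}
    (hx : LinearIndependent K fun j => u j x) :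
    ∃ V : Set (ι → K), IsOpen V ∧ x ∈ V ∧ ∀ y ∈ V, LinearIndependent K fun j => u j y := by
  classical
  cases nonempty_fintype α
  obtain ⟨R, hR⟩ := exists_dual_of_linearIndependent hx
  let M (y : ι → K) : Matrix α α K := .of fun i j => R (u j y) i
  have hMx : M x = 1 := by
    ext i j
    simp [M, hR, Matrix.one_apply, Pi.single_apply]
  refine ⟨{y | y ∈ Set.univ ∧ (M y).det ≠ 0},
    IsRegularOn.isOpen_ne_zero isOpen_univ (.det fun i j => hu (LinearMap.proj i ∘ₗ R) j),
    ⟨trivial, by simp [hMx]⟩, fun y hy => ?_⟩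
  exact (Matrix.linearIndependent_cols_of_det_ne_zero (A := M y) hy.2).of_comp R

end Semicontinuity

lemma card_le_finrank_of_forall_mem {K F α : Type*} [Field K] [AddCommGroup F] [Module K F]
    [FiniteDimensional K F] [Fintype α] {S : Submodule K F} {u : α → F} (hu : ∀ j, u j ∈ S)
    (hli : LinearIndependent K u) : Fintype.card α ≤ Module.finrank K S :=
  (LinearIndependent.of_comp S.subtype
    (show LinearIndependent K (S.subtype ∘ fun j => (⟨u j, hu j⟩ : S)) from
      hli)).fintype_card_le_finrank

namespace QuiverData

attribute [local instance] zariskiTopology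

variable {Q : QuiverData} {d : Fin Q.n → ℕ} {K : Type} [Field K]

/-- The map `z ↦ (h Z_a - Z_a h)_a`: the defect `homDefect z z h` of a fixed operator `h`, as a
linear function of the representation. -/
noncomputable def endDefect (h : CarrierEnd Q d K) :
    RepSpace Q d K →ₗ[K] Fin Q.numArrows → CarrierEnd Q d K :=
  LinearMap.pi fun a => (LinearMap.mulLeft K h - LinearMap.mulRight K h) ∘ₗ
    LinearMap.proj a ∘ₗ arrowFamily Q d K

lemma endDefect_eq_homDefect (h : CarrierEnd Q d K) (z : RepSpace Q d K) :
    endDefect h z = homDefect z z h := rfl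

lemma isRegularOn_homDefect_self (h : CarrierEnd Q d K)
    (φ : Module.Dual K (Fin Q.numArrows → CarrierEnd Q d K)) :
    IsRegularOn Set.univ fun y : RepSpace Q d K => φ (homDefect y y h) :=
  IsRegularOn.linearMap Set.univ (φ ∘ₗ endDefect h)

lemma exists_isOpen_orbitRank_le (x : RepSpace Q d K) :
    ∃ V : Set (RepSpace Q d K), IsOpen V ∧ x ∈ V ∧ ∀ y ∈ V, orbitRank x ≤ orbitRank y := by
  obtain ⟨b, hb, hli⟩ := exists_linearIndependent_map (homDefect x x)
    (Subalgebra.toSubmodule (gradedEnd Q d K))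
  obtain ⟨V, hV, hxV, hVli⟩ := exists_isOpen_forall_linearIndependent
    (u := fun j y => homDefect y y (b j)) (fun φ j => isRegularOn_homDefect_self (b j) φ) hli
  refine ⟨V, hV, hxV, fun y hy => ?_⟩
  simpa using! card_le_finrank_of_forall_mem (S := tangentSpace y) (fun j => ⟨b j, hb j, rfl⟩)
    (hVli y hy)

lemma exists_mem_forall_orbitRank_le {U : Set (RepSpace Q d K)} (hU : Dense U) :
    ∃ x ∈ U, ∀ y : RepSpace Q d K, orbitRank y ≤ orbitRank x := by
  have hfin : (Set.range (orbitRank : RepSpace Q d K → ℕ)).Finite :=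
    (Set.finite_Iic (Module.finrank K (Fin Q.numArrows → CarrierEnd Q d K))).subset
      (Set.range_subset_iff.2 fun y => Submodule.finrank_le _)
  obtain ⟨_, ⟨x, rfl⟩, hx⟩ := Set.exists_max_image _ id hfin (Set.range_nonempty _)
  obtain ⟨V, hV, hxV, hle⟩ := exists_isOpen_orbitRank_le x
  obtain ⟨y, hyV, hyU⟩ := hU.inter_open_nonempty V hV ⟨x, hxV⟩
  exact ⟨y, hyU, fun w => (hx _ ⟨w, rfl⟩).trans (hle y hyV)⟩

-- Otherwise `h / t` would contribute an extra tangent direction at the nearby point `x + t z`.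
lemma homDefect_mem_tangentSpace [Infinite K] {x : RepSpace Q d K}
    (hx : ∀ y : RepSpace Q d K, orbitRank y ≤ orbitRank x) (z : RepSpace Q d K)
    {h : CarrierEnd Q d K} (hh : h ∈ gradedEnd Q d K) (h0 : homDefect x x h = 0) :
    homDefect z z h ∈ tangentSpace x := by
  by_contra hz
  obtain ⟨b, hb, hli⟩ := exists_linearIndependent_map (homDefect x x)
    (Subalgebra.toSubmodule (gradedEnd Q d K))
  let u (j : Fin (orbitRank x + 1)) (y : RepSpace Q d K) :
      Fin Q.numArrows → CarrierEnd Q d K :=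
    Fin.cons (α := fun _ => Fin Q.numArrows → CarrierEnd Q d K) (homDefect z z h)
      (fun j => homDefect y y (b j)) j
  have hu : LinearIndependent K fun j => u j x :=
    linearIndependent_finCons.2 ⟨hli, fun hmem => hz <|
      (Submodule.span_le (p := tangentSpace x)).2
        (Set.range_subset_iff.2 fun j => ⟨b j, hb j, rfl⟩) hmem⟩
  obtain ⟨V, hV, hxV, hVli⟩ := exists_isOpen_forall_linearIndependent (u := u)
    (fun φ => Fin.cases (.const (K := K) Set.univ (φ (homDefect z z h)))
      fun j => isRegularOn_homDefect_self (b j) φ) hu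
  obtain ⟨t, ht, htV⟩ := zariskiTopology.exists_ne_zero_add_smul_mem hV hxV z
  have hth : homDefect (x + t • z) (x + t • z) (t⁻¹ • h) = homDefect z z h := by
    rw [map_smul, ← endDefect_eq_homDefect, map_add, map_smul, endDefect_eq_homDefect,
      endDefect_eq_homDefect, h0, zero_add, smul_smul, inv_mul_cancel₀ ht, one_smul]
  have hmem (j) : u j (x + t • z) ∈ tangentSpace (x + t • z) := by
    cases j using Fin.cases with
    | zero => exact ⟨t⁻¹ • h, (gradedEnd Q d K).smul_mem hh _, hth⟩
    | succ j => exact ⟨b j, hb j, rfl⟩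
  have hcard := card_le_finrank_of_forall_mem hmem (hVli _ htV)
  rw [Fintype.card_fin] at hcard
  exact absurd (hcard.trans (hx _)) (Nat.not_succ_le_self _)

theorem topologicalKrullDim_orbitSet_le [Infinite K] {m : ℕ}
    (hm : ∀ y : RepSpace Q d K, orbitRank y ≤ m) (x : RepSpace Q d K) :
    topologicalKrullDim ↥(orbitSet Q d K x) ≤ m := by
  refine topologicalKrullDim_le_of_forall_exists_isOpen fun ⟨y, hy⟩ => ?_
  obtain ⟨σ⟩ := (inferInstance : Nonempty (OrbitSlice y))
  refine ⟨Subtype.val ⁻¹' σ.domain, σ.isOpen_domain.preimage continuous_subtype_val,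
    σ.self_mem_domain, ?_⟩
  let j (w : ↥(Subtype.val ⁻¹' σ.domain : Set ↥(orbitSet Q d K x))) :
      ↥(σ.domain ∩ orbitSet Q d K x) := ⟨w.1.1, w.2, w.1.2⟩
  have hval : Topology.IsInducing (Subtype.val ∘ j) :=
    (Topology.IsInducing.subtypeVal (t := orbitSet Q d K x)).comp
      (Topology.IsInducing.subtypeVal (t := Subtype.val ⁻¹' σ.domain))
  have hj : Topology.IsInducing j := Topology.IsInducing.of_comp
    ((continuous_subtype_val.comp continuous_subtype_val).subtype_mk _) continuous_subtype_val hval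
  refine hj.topologicalKrullDim_le.trans ?_
  rw [← orbitSet_eq_of_mem hy, σ.topologicalKrullDim_domain_inter_orbitSet]
  exact_mod_cast hm y

theorem orbitRank_le_topologicalKrullDim [Infinite K] (x : RepSpace Q d K) :
    orbitRank x ≤ topologicalKrullDim ↥(orbitSet Q d K x) := by
  obtain ⟨σ⟩ := (inferInstance : Nonempty (OrbitSlice x))
  rw [← σ.topologicalKrullDim_domain_inter_orbitSet]
  exact (Topology.IsEmbedding.inclusion Set.inter_subset_right).isInducing.topologicalKrullDim_le

theorem iSup_topologicalKrullDim_orbitSet [Infinite K] {x : RepSpace Q d K}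
    (hx : ∀ y : RepSpace Q d K, orbitRank y ≤ orbitRank x) :
    ⨆ y : RepSpace Q d K, topologicalKrullDim ↥(orbitSet Q d K y) = orbitRank x :=
  le_antisymm (iSup_le (topologicalKrullDim_orbitSet_le hx))
    ((orbitRank_le_topologicalKrullDim x).trans
      (le_iSup (fun y : RepSpace Q d K => topologicalKrullDim ↥(orbitSet Q d K y)) x))

lemma orbitRank_le_card (x : RepSpace Q d K) : orbitRank x ≤ Fintype.card (Coords Q d) := by
  rw [← finrank_arrowSpace (Q := Q) (d := d) (K := K)]
  exact Submodule.finrank_mono (tangentSpace_le_arrowSpace x)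

theorem dense_orbitSet_iff [Infinite K] (x : RepSpace Q d K) :
    Dense (orbitSet Q d K x) ↔ orbitRank x = Fintype.card (Coords Q d) := by
  obtain ⟨σ⟩ := (inferInstance : Nonempty (OrbitSlice x))
  constructor
  · intro h
    have hdim := σ.topologicalKrullDim_domain_inter_orbitSet
    rw [Set.inter_eq_left.2 (σ.domain_subset_orbitSet_of_dense h),
      zariskiTopology.topologicalKrullDim_of_isOpen σ.isOpen_domain
        ⟨x, σ.self_mem_domain⟩] at hdim
    exact_mod_cast hdim.symm
  · intro h
    have := zariskiTopology.irreducibleSpace (ι := Coords Q d) (K := K)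
    exact (σ.isOpen_domain.dense ⟨x, σ.self_mem_domain⟩).mono
      (σ.domain_subset_orbitSet_of_orbitRank_eq h)

end QuiverData

/-! ### Primitive idempotents -/

section PrimitiveIdempotents

/-- Primitive idempotents: nonzero idempotents which do not split into two nonzero orthogonal
idempotents. The splitting is expressed through one summand `e`, which must be `0` or `f`. -/
structure IsPrimitiveIdempotent {A : Type*} [Ring A] (f : A) : Prop where
  ne_zero : f ≠ 0
  idem : IsIdempotentElem f
  eq_zero_or_eq : ∀ e, IsIdempotentElem e → f * e = e → e * f = e → e = 0 ∨ e = f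

lemma exists_commute_mul_pow_succ_eq_pow (K : Type*) {A : Type*} [Field K] [Ring A] [Algebra K A]
    [Algebra.IsIntegral K A] (a : A) :
    ∃ (n : ℕ) (b : A), Commute a b ∧ b * a ^ (n + 1) = a ^ n := by
  have hp : minpoly K a ≠ 0 := minpoly.ne_zero (Algebra.IsIntegral.isIntegral a)
  obtain ⟨q, hq, hXq⟩ := Polynomial.exists_eq_pow_rootMultiplicity_mul_and_not_dvd _ hp 0
  rw [map_zero, sub_zero] at hq hXq
  set n := (minpoly K a).rootMultiplicity 0
  set c := q.coeff 0
  have hc : c ≠ 0 := fun h => hXq (Polynomial.X_dvd_iff.2 h)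
  have hqa : Polynomial.aeval a q = Polynomial.aeval a q.divX * a + algebraMap K A c := by
    conv_lhs => rw [← q.divX_mul_X_add]
    simp [c]
  have h0 : a ^ n * Polynomial.aeval a q = 0 := by
    simpa [hq] using minpoly.aeval K a
  have hcomm : Commute a (Polynomial.aeval a q.divX) := by
    simpa using (Commute.all Polynomial.X q.divX).map (Polynomial.aeval a)
  refine ⟨n, -(c⁻¹ • Polynomial.aeval a q.divX), (hcomm.smul_right _).neg_right, ?_⟩
  have h1 : c • a ^ n = -(Polynomial.aeval a q.divX * a ^ (n + 1)) := by
    rw [hqa, mul_add, ← Algebra.commutes, ← Algebra.smul_def] at h0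
    rw [eq_neg_iff_add_eq_zero, add_comm, ← h0, pow_succ, ← mul_assoc, ← mul_assoc,
      (hcomm.pow_left n).eq]
  rw [neg_mul, smul_mul_assoc, ← smul_neg, ← h1, smul_smul, inv_mul_cancel₀ hc, one_smul]

lemma mul_pow_mul_pow_eq_pow {M : Type*} [Monoid M] {a b : M} {n : ℕ}
    (h : b * a ^ (n + 1) = a ^ n) (k : ℕ) : (b * a) ^ k * a ^ n = a ^ n := by
  induction k with
  | zero => simp
  | succ k ih => rw [pow_succ, mul_assoc, mul_assoc b, ← pow_succ', h, ih]

theorem IsPrimitiveIdempotent.isNilpotent_or_exists_mul_eq (K : Type*) {A : Type*} [Field K]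
    [Ring A] [Algebra K A] [Algebra.IsIntegral K A] {f : A} (hf : IsPrimitiveIdempotent f) {a : A}
    (hfa : f * a = a) (haf : a * f = a) : IsNilpotent a ∨ ∃ u, u * a = f := by
  obtain ⟨n, b, hab, hb⟩ := exists_commute_mul_pow_succ_eq_pow K a
  have hea := mul_pow_mul_pow_eq_pow hb (n + 1)
  have hright : (b * a) ^ (n + 1) = b ^ (n + 1) * a ^ n * a := by
    rw [hab.symm.mul_pow, pow_succ a, ← mul_assoc]
  have hleft : (b * a) ^ (n + 1) = a * (b ^ (n + 1) * a ^ n) := by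
    rw [hab.symm.mul_pow, pow_succ' a, ← mul_assoc, ← mul_assoc, (hab.pow_right _).eq]
  have hidem : IsIdempotentElem ((b * a) ^ (n + 1)) := by
    have hpow : (b * a) ^ (n + 1) = a ^ n * (b ^ (n + 1) * a) := by
      rw [hright, ← mul_assoc, (hab.pow_pow _ _).eq]
    rw [IsIdempotentElem]
    nth_rw 2 [hpow]
    rw [← mul_assoc, hea, ← hpow]
  rcases hf.eq_zero_or_eq _ hidem (by rw [hleft, ← mul_assoc, hfa])
    (by rw [hright, mul_assoc, haf])
    with h | h
  · exact .inl ⟨n, by rw [← hea, h, zero_mul]⟩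
  · exact .inr ⟨_, hright.symm.trans h⟩

theorem IsPrimitiveIdempotent.exists_mul_mul_eq (K : Type*) {A : Type*} [Field K]
    [Ring A] [Algebra K A] [Algebra.IsIntegral K A] {f : A} (hf : IsPrimitiveIdempotent f) {b : A}
    (hb : b * f ∉ Ring.jacobson A) : ∃ c, c * (b * f) = f := by
  rw [← Ideal.jacobson_bot, Ideal.mem_jacobson_iff] at hb
  push Not at hb
  obtain ⟨y, hy⟩ := hb
  have hnil : ¬ IsNilpotent (f * (y * (b * f))) := by
    rintro ⟨k, hk⟩
    have hp : IsNilpotent (y * b * f) := ⟨k + 1, by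
      rw [pow_succ]
      nth_rw 1 [show y * b * f = y * b * f * f by rw [mul_assoc _ f, hf.idem.eq]]
      rw [mul_pow_mul, mul_assoc y, hk, mul_zero]⟩
    obtain ⟨w, hw⟩ := hp.isUnit_add_one
    refine hy ↑w⁻¹ ?_
    rw [Ideal.mem_bot, sub_eq_zero, mul_assoc, ← mul_add_one, ← mul_assoc y,
      ← hw, Units.inv_mul]
  obtain ⟨u, hu⟩ := (hf.isNilpotent_or_exists_mul_eq K (by rw [← mul_assoc, hf.idem])
    (by simp only [mul_assoc, hf.idem.eq])).resolve_left hnil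
  exact ⟨u * f * y, by simpa only [mul_assoc] using hu⟩

lemma eq_zero_of_isIdempotentElem_of_mem_jacobson {A : Type*} [Ring A] {e : A}
    (he : IsIdempotentElem e) (hmem : e ∈ Ring.jacobson A) : e = 0 := by
  rw [← Ideal.jacobson_bot, Ideal.mem_jacobson_iff] at hmem
  obtain ⟨z, hz⟩ := hmem (-1)
  have hinv : z * (1 - e) = 1 := by
    rw [Ideal.mem_bot, sub_eq_zero] at hz
    rwa [mul_neg_one, neg_mul, neg_add_eq_sub, ← mul_one_sub] at hz
  calc e = z * (1 - e) * e := by rw [hinv, one_mul]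
    _ = 0 := by rw [mul_assoc, sub_mul, one_mul, he.eq, sub_self, mul_zero]

end PrimitiveIdempotents

section Length

variable {B ι κ : Type*} [Ring B] [Fintype ι] [Fintype κ]

lemma length_self_le_card {f : ι → B} (hf : CompleteOrthogonalIdempotents f)
    (hsimple : ∀ r b, b * f r ≠ 0 → ∃ c, c * (b * f r) = f r) :
    Module.length B B ≤ Fintype.card ι := by
  classical
  have hlen (r) : Module.length B (Ideal.span {f r}) ≤ 1 := by
    rcases eq_or_ne (f r) 0 with h | h
    · rw [h, Ideal.span_singleton_eq_bot.2 rfl, Module.length_eq_zero]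
      exact zero_le_one
    refine (Module.length_eq_one_iff.2 <| isSimpleModule_iff_toSpanSingleton_surjective.2
      ⟨Submodule.nontrivial_iff_ne_bot.2 (by simpa using h), ?_⟩).le
    rintro ⟨m, hm⟩ hm0 ⟨m', hm'⟩
    obtain ⟨b, rfl⟩ := Ideal.mem_span_singleton'.1 hm
    obtain ⟨b', rfl⟩ := Ideal.mem_span_singleton'.1 hm'
    obtain ⟨c, hc⟩ := hsimple r b fun h0 => hm0 (Subtype.ext h0)
    exact ⟨b' * c, Subtype.ext (by simp [mul_assoc, hc])⟩
  let T : (∀ r, Ideal.span {f r}) →ₗ[B] B := ∑ r, Submodule.subtype _ ∘ₗ LinearMap.proj r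
  have hT : Function.Surjective T := fun b =>
    ⟨fun r => ⟨b * f r, Ideal.mul_mem_left _ _ (Ideal.mem_span_singleton_self _)⟩, by
      simp [T, LinearMap.sum_apply, ← Finset.mul_sum, hf.complete]⟩
  calc Module.length B B ≤ Module.length B (∀ r, Ideal.span {f r}) :=
        Module.length_le_of_surjective T hT
    _ = ∑ r, Module.length B (Ideal.span {f r}) := Module.length_pi_of_fintype _ _
    _ ≤ ∑ _ : ι, 1 := Finset.sum_le_sum fun r _ => hlen r
    _ = Fintype.card ι := by simp

lemma card_le_length_self {e : κ → B} (he : OrthogonalIdempotents e) (hne : ∀ k, e k ≠ 0) :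
    Fintype.card κ ≤ Module.length B B := by
  classical
  let T : B →ₗ[B] ∀ k, Ideal.span {e k} := LinearMap.pi fun k =>
    LinearMap.codRestrict (Ideal.span {e k}) (LinearMap.toSpanSingleton B B (e k)) fun b =>
      Ideal.mul_mem_left _ b (Ideal.mem_span_singleton_self _)
  have hT : Function.Surjective T := fun m => by
    choose b hb using fun k => Ideal.mem_span_singleton'.1 (m k).2
    refine ⟨∑ k, b k * e k, funext fun k => Subtype.ext ?_⟩
    calc (∑ j, b j * e j) * e k = b k * e k := by
          simp [Finset.sum_mul, mul_assoc, he.mul_eq]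
      _ = m k := hb k
  have hpos (k) : 1 ≤ Module.length B (Ideal.span {e k}) := by
    have : Nontrivial (Ideal.span {e k}) :=
      Submodule.nontrivial_iff_ne_bot.2 (by simpa using hne k)
    exact Order.one_le_iff_pos.2 Module.length_pos
  calc (Fintype.card κ : ℕ∞) = ∑ _ : κ, 1 := by simp
    _ ≤ ∑ k, Module.length B (Ideal.span {e k}) := Finset.sum_le_sum fun k _ => hpos k
    _ = Module.length B (∀ k, Ideal.span {e k}) := (Module.length_pi_of_fintype _ _).symm
    _ ≤ Module.length B B := Module.length_le_of_surjective T hT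

end Length

-- Modulo the Jacobson radical, a primitive idempotent generates a simple left ideal, so both
-- cardinalities compare with the length of the semisimple quotient.
theorem card_le_card_of_isPrimitiveIdempotent (K : Type*) {A ι κ : Type*} [Field K] [Ring A]
    [Algebra K A] [Algebra.IsIntegral K A] [Fintype ι] [Fintype κ] {f : ι → A} {e : κ → A}
    (hf : CompleteOrthogonalIdempotents f) (hprim : ∀ r, IsPrimitiveIdempotent (f r))
    (he : OrthogonalIdempotents e) (hne : ∀ k, e k ≠ 0) :
    Fintype.card κ ≤ Fintype.card ι := by
  let π := Ideal.Quotient.mk (Ring.jacobson A)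
  have hle : Module.length (A ⧸ Ring.jacobson A) (A ⧸ Ring.jacobson A) ≤ Fintype.card ι := by
    refine length_self_le_card (hf.map π) fun r b hb => ?_
    obtain ⟨b, rfl⟩ := Ideal.Quotient.mk_surjective b
    obtain ⟨c, hc⟩ := (hprim r).exists_mul_mul_eq K (b := b) fun hmem =>
      hb ((map_mul π _ _).symm.trans (Ideal.Quotient.eq_zero_iff_mem.2 hmem))
    exact ⟨π c, by simp only [Function.comp_apply, ← map_mul, π, hc]⟩
  have hge := card_le_length_self (he.map π) fun k hk => hne k <|
    eq_zero_of_isIdempotentElem_of_mem_jacobson (he.idem k) (Ideal.Quotient.eq_zero_iff_mem.1 hk)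
  exact_mod_cast hge.trans hle

/-! ### Square-zero elements and pinchings -/

section SquareZero

variable {A : Type*} [Ring A] {f φ ψ x : A}

lemma exists_pow_ne_zero_and_mul_self_eq_zero {b : A} (hb : IsNilpotent b)
    (h0 : b ≠ 0) : ∃ n, b ^ (n + 1) ≠ 0 ∧ b ^ (n + 1) * b ^ (n + 1) = 0 := by
  have : Nontrivial A := ⟨b, 0, h0⟩
  obtain ⟨n, hn⟩ : ∃ n, nilpotencyClass b = n + 2 := by
    have h1 : nilpotencyClass b ≠ 0 := (pos_nilpotencyClass_iff.2 hb).ne'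
    have h2 : nilpotencyClass b ≠ 1 := fun h => h0 (nilpotencyClass_eq_one.1 h)
    exact ⟨nilpotencyClass b - 2, by omega⟩
  refine ⟨n, by simpa [hn] using pow_pred_nilpotencyClass hb, ?_⟩
  rw [← pow_add]
  exact pow_eq_zero_of_le (by omega) (pow_nilpotencyClass hb)

theorem IsPrimitiveIdempotent.exists_mul_self_eq_zero (K : Type*) [Field K] [IsAlgClosed K]
    [Algebra K A] [FiniteDimensional K A] (hf : IsPrimitiveIdempotent f) {a : A}
    (hfa : f * a = a) (haf : a * f = a) (ha : ∀ c : K, a ≠ c • f) :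
    ∃ φ : A, φ ≠ 0 ∧ φ * φ = 0 ∧ f * φ = φ ∧ φ * f = φ := by
  let W : Submodule K A := LinearMap.eqLocus (LinearMap.mulLeft K f) LinearMap.id
  let T : Module.End K W := (LinearMap.mulLeft K a).restrict fun y _ =>
    show f * (a * y) = a * y by rw [← mul_assoc, hfa]
  have : Nontrivial W := ⟨⟨f, hf.idem⟩, 0, fun h => hf.ne_zero (congrArg Subtype.val h)⟩
  obtain ⟨c, hc⟩ := Module.End.exists_eigenvalue T
  obtain ⟨⟨y, hfy : f * y = y⟩, hy⟩ := hc.exists_hasEigenvector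
  have hay : a * y = c • y := congrArg Subtype.val hy.apply_eq_smul
  have hy0 : y ≠ 0 := fun h => hy.2 (Subtype.ext h)
  set b := a - c • f
  have hfb : f * b = b := by rw [mul_sub, mul_smul_comm, hfa, hf.idem]
  have hbf : b * f = b := by rw [sub_mul, smul_mul_assoc, haf, hf.idem]
  have hby : b * y = 0 := by rw [sub_mul, smul_mul_assoc, hay, hfy, sub_self]
  have hb : IsNilpotent b := (hf.isNilpotent_or_exists_mul_eq K hfb hbf).resolve_right
    fun ⟨u, hu⟩ => hy0 <| by rw [← hfy, ← hu, mul_assoc, hby, mul_zero]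
  obtain ⟨n, hn, hsq⟩ := exists_pow_ne_zero_and_mul_self_eq_zero hb (sub_ne_zero.2 (ha c))
  exact ⟨b ^ (n + 1), hn, hsq, by rw [pow_succ', ← mul_assoc, hfb],
    by rw [pow_succ, mul_assoc, hbf]⟩

lemma mul_mul_eq_and_mul_mul_eq_zero_of_sq_zero (hsq : φ * φ = 0) (h : φ * ψ * φ = φ) :
    φ * (ψ * (1 - ψ * φ)) * φ = φ ∧ ψ * (1 - ψ * φ) * (ψ * (1 - ψ * φ)) * φ = 0 := by
  have h1 : (1 - ψ * φ) * φ = φ := by rw [sub_mul, one_mul, mul_assoc, hsq, mul_zero, sub_zero]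
  have h2 : (1 - ψ * φ) * (ψ * φ) = 0 := by
    rw [sub_mul, one_mul, mul_assoc, ← mul_assoc φ, h, sub_self]
  exact ⟨by rw [mul_assoc, mul_assoc, h1, ← mul_assoc, h],
    by rw [mul_assoc, mul_assoc ψ _ φ, h1, mul_assoc, h2, mul_zero]⟩

lemma isIdempotentElem_add_mul (hsq : φ * φ = 0) (h : φ * ψ * φ = φ) :
    IsIdempotentElem (φ + ψ * φ) := by
  have h' : φ * (ψ * φ) = φ := by rw [← mul_assoc, h]
  simp only [IsIdempotentElem, add_mul, mul_add, mul_assoc, hsq, h', mul_zero, zero_add]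

lemma commute_sub_mul_mul_add_mul (hx : Commute x φ) (h : φ * ψ * φ = φ) (h0 : ψ * ψ * φ = 0) :
    Commute (x - (1 - ψ * φ) * x * ψ) (φ + ψ * φ) := by
  have h' : φ * (ψ * φ) = φ := by rw [← mul_assoc, h]
  have hleft : (φ + ψ * φ) * (1 - ψ * φ) = 0 := by
    rw [mul_sub, mul_one, add_mul, mul_assoc, h', sub_self]
  have hright : ψ * (φ + ψ * φ) = ψ * φ := by rw [mul_add, ← mul_assoc ψ ψ, h0, add_zero]
  calc (x - (1 - ψ * φ) * x * ψ) * (φ + ψ * φ)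
      = x * φ + ψ * φ * x * (ψ * φ) := by rw [sub_mul, mul_assoc, hright]; noncomm_ring
    _ = φ * x + ψ * (x * (φ * (ψ * φ))) := by rw [hx.eq, mul_assoc ψ φ, ← hx.eq]; noncomm_ring
    _ = (φ + ψ * φ) * x := by rw [h', hx.eq, add_mul, mul_assoc]
    _ = (φ + ψ * φ) * (x - (1 - ψ * φ) * x * ψ) := by
      rw [mul_sub, ← mul_assoc, ← mul_assoc, hleft, zero_mul, zero_mul, sub_zero]

end SquareZero

section Splitting

variable {A ι : Type*} [Ring A] {f : ι → A}

lemma commute_of_mul_eq_self (hf : OrthogonalIdempotents f) {r : ι} {a : A} (hfa : f r * a = a)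
    (haf : a * f r = a) (q : ι) : Commute (f q) a := by
  rcases eq_or_ne q r with rfl | hq
  · exact hfa.trans haf.symm
  · rw [Commute, SemiconjBy, ← hfa, ← mul_assoc, hf.ortho hq, hfa, ← haf, mul_assoc,
      hf.ortho hq.symm, zero_mul, mul_zero]

lemma orthogonalIdempotents_option_mul_one_sub (hf : OrthogonalIdempotents f) {ε : A}
    (hε : IsIdempotentElem ε) (hcomm : ∀ q, Commute (f q) ε) :
    OrthogonalIdempotents (Option.elim · ε fun q => f q * (1 - ε)) := by
  have h0 : ε * (1 - ε) = 0 := hε.mul_one_sub_self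
  have hcomm' (q) : Commute (f q) (1 - ε) := (Commute.one_right _).sub_right (hcomm q)
  have horth : OrthogonalIdempotents fun q => f q * (1 - ε) :=
    ⟨fun q => (hf.idem q).mul_of_commute (hcomm' q) hε.one_sub, fun q q' hq => by
      change f q * (1 - ε) * (f q' * (1 - ε)) = 0
      rw [mul_assoc, ← mul_assoc _ (f q'), ← (hcomm' q').eq, mul_assoc, ← mul_assoc,
        hf.ortho hq, zero_mul]⟩
  have hleft (q) : ε * (f q * (1 - ε)) = 0 := by
    rw [← mul_assoc, ← (hcomm q).eq, mul_assoc, h0, mul_zero]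
  have hright (q) : f q * (1 - ε) * ε = 0 := by rw [mul_assoc, hε.one_sub_mul_self, mul_zero]
  refine ⟨?_, ?_⟩
  · rintro (_ | q)
    exacts [hε, horth.idem q]
  · rintro (_ | q) (_ | q') hne
    exacts [absurd rfl hne, hleft q', hright q, horth.ortho fun h => hne (congrArg some h)]

lemma optionElim_add_mul_ne_zero (hf : OrthogonalIdempotents f) (hne : ∀ q, f q ≠ 0) {r : ι}
    {φ ψ : A} (hφ0 : φ ≠ 0) (hsq : φ * φ = 0) (h : φ * ψ * φ = φ) (hfφ : f r * φ = φ)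
    (hfψ : f r * ψ = ψ) (o : Option ι) :
    (o.elim (φ + ψ * φ) fun q => f q * (1 - (φ + ψ * φ))) ≠ 0 := by
  have hφε : φ * (φ + ψ * φ) = φ := by rw [mul_add, hsq, zero_add, ← mul_assoc, h]
  have hεφ : (φ + ψ * φ) * φ = 0 := by rw [add_mul, mul_assoc, hsq, mul_zero, add_zero]
  have hfε : f r * (φ + ψ * φ) = φ + ψ * φ := by rw [mul_add, ← mul_assoc, hfφ, hfψ]
  intro h0
  cases o with
  | none => exact hφ0 (by rw [← hφε, show φ + ψ * φ = 0 from h0, mul_zero])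
  | some q =>
    replace h0 : f q * (1 - (φ + ψ * φ)) = 0 := h0
    rcases eq_or_ne q r with rfl | hq
    · refine hφ0 ?_
      calc φ = f q * (1 - (φ + ψ * φ)) * φ := by
            rw [mul_assoc, sub_mul, hεφ, one_mul, sub_zero, hfφ]
        _ = 0 := by rw [h0, zero_mul]
    · rw [mul_sub, mul_one, ← hfε, ← mul_assoc, hf.ortho hq, zero_mul, sub_zero] at h0
      exact hne q h0

end Splitting

section Pinching

variable (K : Type*) {A ι κ : Type*} [Field K] [Ring A] [Algebra K A] [Fintype ι] [Fintype κ]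

/-- The block-diagonal part `z ↦ ∑ k, e k * z * e' k` of `z` with respect to two families of
idempotents, which may differ because domain and codomain can be decomposed differently. -/
noncomputable def pinching (e e' : ι → A) : A →ₗ[K] A :=
  ∑ k, LinearMap.mulLeftRight K (e k, e' k)

variable {K}

lemma pinching_apply (e e' : ι → A) (z : A) : pinching K e e' z = ∑ k, e k * z * e' k := by
  simp [pinching, LinearMap.sum_apply, mul_assoc]

lemma pinching_comp_pinching (e e' : ι → A) (f f' : κ → A) :
    pinching K e e' ∘ₗ pinching K f f' =
      pinching K (fun p : ι × κ => e p.1 * f p.2) fun p => f' p.2 * e' p.1 := by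
  ext z
  simp only [LinearMap.comp_apply, pinching_apply, Fintype.sum_prod_type, Finset.mul_sum,
    Finset.sum_mul, mul_assoc]

lemma pinching_mul_mul {e e' : ι → A} {a b : A} (ha : ∀ k, Commute (e k) a)
    (hb : ∀ k, Commute (e' k) b) (z : A) :
    pinching K e e' (a * z * b) = a * pinching K e e' z * b := by
  simp only [pinching_apply, Finset.mul_sum, Finset.sum_mul]
  refine Finset.sum_congr rfl fun k _ => ?_
  rw [← mul_assoc, ← mul_assoc, (ha k).eq, mul_assoc _ b, ← (hb k).eq]
  simp only [mul_assoc]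

lemma pinching_eq_self {e : ι → A} (he : CompleteOrthogonalIdempotents e) {z : A}
    (hz : ∀ k, Commute (e k) z) : pinching K e e z = z := by
  calc pinching K e e z = ∑ k, z * e k := by
        simp only [pinching_apply, (hz _).eq, mul_assoc, (he.idem _).eq]
    _ = z := by rw [← Finset.mul_sum, he.complete, mul_one]

lemma mul_pinching {e : ι → A} (he : OrthogonalIdempotents e) (z : A) (k) :
    e k * pinching K e e z = e k * z * e k := by
  classical
  simp [pinching_apply, Finset.mul_sum, ← mul_assoc, he.mul_eq]

lemma pinching_mul {e : ι → A} (he : OrthogonalIdempotents e) (z : A) (k) :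
    pinching K e e z * e k = e k * z * e k := by
  classical
  simp [pinching_apply, Finset.sum_mul, mul_assoc, he.mul_eq]

lemma commute_pinching {e : ι → A} (he : OrthogonalIdempotents e) (z : A) (k) :
    Commute (e k) (pinching K e e z) :=
  (mul_pinching he z k).trans (pinching_mul he z k).symm

variable {V : Type*} [AddCommGroup V] [Module K V] [FiniteDimensional K V]

theorem finrank_range_pinching {e e' : ι → Module.End K V} (he : ∀ k, IsIdempotentElem (e k))
    (he' : OrthogonalIdempotents e') :
    Module.finrank K (LinearMap.range (pinching K e e')) =
      ∑ k, Module.finrank K (LinearMap.range (e k)) *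
        Module.finrank K (LinearMap.range (e' k)) := by
  let P : Module.End K V →ₗ[K] ∀ k, LinearMap.range (e' k) →ₗ[K] LinearMap.range (e k) :=
    LinearMap.pi fun k => LinearMap.compRight K (e k).rangeRestrict ∘ₗ
      LinearMap.lcomp K V (LinearMap.range (e' k)).subtype
  let J : (∀ k, LinearMap.range (e' k) →ₗ[K] LinearMap.range (e k)) →ₗ[K] Module.End K V :=
    ∑ k, LinearMap.compRight K (LinearMap.range (e k)).subtype ∘ₗ
      LinearMap.lcomp K (LinearMap.range (e k)) (e' k).rangeRestrict ∘ₗ LinearMap.proj k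
  have hP (z k) (v : LinearMap.range (e' k)) : (P z k v : V) = e k (z v) := rfl
  have hJ (g) (v : V) : J g v = ∑ k, (g k ⟨e' k v, v, rfl⟩ : V) := by
    simp only [J, LinearMap.sum_apply]; rfl
  have hPJ (g) : P (J g) = g := by
    funext k
    ext ⟨v, hv⟩
    have hv' : e' k v = v := (LinearMap.IsIdempotentElem.mem_range_iff (he'.idem k)).1 hv
    rw [hP, hJ, Finset.sum_eq_single k]
    · rw [(LinearMap.IsIdempotentElem.mem_range_iff (he k)).1 (Subtype.prop _)]
      simp only [hv']
    · intro j _ hj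
      have h0 : e' j v = 0 := by rw [← hv']; exact LinearMap.congr_fun (he'.ortho hj) v
      simp only [h0]
      exact congrArg Subtype.val (map_zero (g j))
    · simp
  have hJP : pinching K e e' = J ∘ₗ P := by
    ext z v
    simp only [pinching_apply, LinearMap.comp_apply, hJ, LinearMap.sum_apply]
    rfl
  rw [hJP, LinearMap.range_comp_of_range_eq_top _
      (LinearMap.range_eq_top.2 (Function.RightInverse.surjective hPJ)),
    LinearMap.finrank_range_of_inj (Function.LeftInverse.injective hPJ),
    Module.finrank_pi_fintype]
  simp only [Module.finrank_linearMap, mul_comm]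

end Pinching

section FiniteDimensional

variable {K V W : Type*} [Field K] [AddCommGroup V] [Module K V] [AddCommGroup W] [Module K W]

lemma exists_mul_mul_eq_self (φ : Module.End K V) : ∃ ψ : Module.End K V, φ * ψ * φ = φ := by
  obtain ⟨g, hg⟩ := φ.rangeRestrict.exists_rightInverse_of_surjective φ.range_rangeRestrict
  obtain ⟨ψ, hψ⟩ := LinearMap.exists_extend g
  refine ⟨ψ, LinearMap.ext fun v => ?_⟩
  calc φ (ψ (φ v)) = φ (g (φ.rangeRestrict v)) :=
        congrArg φ (LinearMap.congr_fun hψ (φ.rangeRestrict v))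
    _ = φ v := congrArg Subtype.val (LinearMap.congr_fun hg (φ.rangeRestrict v))

lemma finrank_map_add_finrank_inf_ker [FiniteDimensional K V] (S : Submodule K V)
    (T : V →ₗ[K] W) :
    Module.finrank K (S.map T) + Module.finrank K ↥(S ⊓ LinearMap.ker T) = Module.finrank K S := by
  rw [← LinearMap.finrank_range_add_finrank_ker (T.domRestrict S), LinearMap.range_domRestrict,
    LinearMap.ker_domRestrict, ← Submodule.map_comap_subtype,
    LinearEquiv.finrank_eq (Submodule.equivMapOfInjective _ S.subtype_injective _)]

lemma finrank_range_pi_comp_proj {ι : Type*} [Fintype ι] [FiniteDimensional K W]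
    (T : ι → V →ₗ[K] W) :
    Module.finrank K (LinearMap.range (LinearMap.pi fun i => T i ∘ₗ LinearMap.proj i)) =
      ∑ i, Module.finrank K (LinearMap.range (T i)) := by
  let j : (∀ i, LinearMap.range (T i)) →ₗ[K] ι → W :=
    LinearMap.pi fun i => (LinearMap.range (T i)).subtype ∘ₗ LinearMap.proj i
  have hj : Function.Injective j := fun u v h => funext fun i => Subtype.ext (congrFun h i)
  have hrange : LinearMap.range (LinearMap.pi fun i => T i ∘ₗ LinearMap.proj i) =
      LinearMap.range j := by
    ext w
    constructor
    · rintro ⟨v, rfl⟩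
      exact ⟨fun i => ⟨T i (v i), v i, rfl⟩, rfl⟩
    · rintro ⟨u, rfl⟩
      choose v hv using fun i => (u i).2
      exact ⟨v, funext hv⟩
  rw [hrange, LinearMap.finrank_range_of_inj hj, Module.finrank_pi_fintype]

end FiniteDimensional

/-! ### Endomorphism algebras and their deformations -/

section Decomposition

variable {K V ι : Type*} [Field K] [AddCommGroup V] [Module K V] [Fintype ι]

theorem exists_completeOrthogonalIdempotents_range_eq {N : ι → Submodule K V}
    (hN : iSupIndep N) (htop : ⨆ r, N r = ⊤) :
    ∃ f : ι → Module.End K V, CompleteOrthogonalIdempotents f ∧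
      (∀ r, LinearMap.range (f r) = N r) ∧
      ∀ T : Module.End K V, (∀ r, (N r).map T ≤ N r) → ∀ r, Commute (f r) T := by
  classical
  let := ((DirectSum.isInternal_submodule_iff_iSupIndep_and_iSup_eq_top N).2
    ⟨hN, htop⟩).chooseDecomposition
  let f (r) : Module.End K V := (N r).subtype ∘ₗ DirectSum.component K ι _ r ∘ₗ
    (DirectSum.decomposeLinearEquiv N).toLinearMap
  have hmem (r v) : f r v ∈ N r := Subtype.prop _
  have hfix {r v} (hv : v ∈ N r) : f r v = v := DirectSum.decompose_of_mem_same N hv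
  have hzero {r t v} (hv : v ∈ N t) (h : t ≠ r) : f r v = 0 := DirectSum.decompose_of_mem_ne N hv h
  have hext {S T : Module.End K V} (h : ∀ t, ∀ v ∈ N t, S v = T v) : S = T :=
    DirectSum.decompose_lhom_ext N fun t => LinearMap.ext fun v => h t v v.2
  refine ⟨f, ⟨⟨fun r => LinearMap.ext fun v => hfix (hmem r v),
    fun r t hrt => LinearMap.ext fun v => hzero (hmem t v) hrt.symm⟩, ?_⟩, fun r => ?_,
    fun T hT r => ?_⟩
  · refine hext fun t v hv => ?_
    rw [LinearMap.sum_apply, Finset.sum_eq_single t (fun r _ hr => hzero hv hr.symm) (by simp),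
      hfix hv, Module.End.one_apply]
  · exact le_antisymm (LinearMap.range_le_iff_comap.2 (eq_top_iff.2 fun v _ => hmem r v))
      fun v hv => ⟨v, hfix hv⟩
  · refine hext fun t v hv => ?_
    have hTv : T v ∈ N t := hT t ⟨v, hv, rfl⟩
    rw [Module.End.mul_apply, Module.End.mul_apply]
    obtain rfl | htr := eq_or_ne t r
    · rw [hfix hTv, hfix hv]
    · rw [hzero hTv htr, hzero hv htr, map_zero]

end Decomposition

namespace QuiverData

attribute [local instance] zariskiTopology

variable {Q : QuiverData} {d : Fin Q.n → ℕ} {K : Type} [Field K]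

section EndAlg

/-- The endomorphism algebra of the representation `x`, as an algebra of operators on the carrier
space. -/
noncomputable def endAlg (x : RepSpace Q d K) : Subalgebra K (CarrierEnd Q d K) :=
  Subalgebra.centralizer K (Set.range vertexIdem ∪ Set.range (arrowEnd x))

lemma mem_endAlg {x : RepSpace Q d K} {g : CarrierEnd Q d K} :
    g ∈ endAlg x ↔ (∀ i, Commute g (vertexIdem i)) ∧ ∀ a, Commute g (arrowEnd x a) := by
  simp only [endAlg, Subalgebra.mem_centralizer_iff, Set.union_def, Set.mem_ofPred_eq, or_imp,
    forall_and, Set.forall_mem_range, Commute, SemiconjBy, eq_comm (a := g * _)]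

lemma mem_endAlg_iff_homDefect {x : RepSpace Q d K} {g : CarrierEnd Q d K} :
    g ∈ endAlg x ↔ g ∈ gradedEnd Q d K ∧ homDefect x x g = 0 := by
  rw [mem_endAlg, mem_gradedEnd, homDefect_eq_zero_iff]
  rfl

lemma stable_range {x : RepSpace Q d K} {e : CarrierEnd Q d K} (he : e ∈ endAlg x) :
    Stable Q d K x (LinearMap.range e) := by
  have hmap {T : CarrierEnd Q d K} (hT : Commute e T) :
      (LinearMap.range e).map T ≤ LinearMap.range e := by
    rintro _ ⟨_, ⟨v, rfl⟩, rfl⟩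
    exact ⟨T v, LinearMap.congr_fun hT v⟩
  exact ⟨fun a => hmap ((mem_endAlg.1 he).2 a), fun i => hmap ((mem_endAlg.1 he).1 i)⟩

lemma IndecompSub.eq_zero_or_eq {x : RepSpace Q d K} {f e : CarrierEnd Q d K}
    (hind : IndecompSub Q d K x (LinearMap.range f)) (hf : f ∈ endAlg x) (he : e ∈ endAlg x)
    (hff : IsIdempotentElem f) (hee : IsIdempotentElem e) (hfe : f * e = e) (hef : e * f = e) :
    e = 0 ∨ e = f := by
  have hfd : f * (f - e) = f - e := by rw [mul_sub, hff, hfe]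
  have hed : e * (f - e) = 0 := by rw [mul_sub, hef, hee, sub_self]
  have hle {g : CarrierEnd Q d K} (hg : f * g = g) : LinearMap.range g ≤ LinearMap.range f :=
    hg ▸ LinearMap.range_comp_le_range g f
  have hsup : LinearMap.range e ⊔ LinearMap.range (f - e) = LinearMap.range f := by
    refine le_antisymm (sup_le (hle hfe) (hle hfd)) ?_
    rintro _ ⟨v, rfl⟩
    exact Submodule.mem_sup.2 ⟨e v, ⟨v, rfl⟩, (f - e) v, ⟨v, rfl⟩, by simp⟩
  have hinf : LinearMap.range e ⊓ LinearMap.range (f - e) = ⊥ := by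
    refine (Submodule.eq_bot_iff _).2 fun w hw => ?_
    obtain ⟨v, rfl⟩ := hw.2
    rw [← (LinearMap.IsIdempotentElem.mem_range_iff hee).1 hw.1]
    exact LinearMap.congr_fun hed v
  refine (hind.2 _ _ (stable_range he) (stable_range (sub_mem hf he)) (hle hfe) (hle hfd) hsup
    hinf).imp LinearMap.range_eq_bot.1 fun h => ?_
  exact (sub_eq_zero.1 (LinearMap.range_eq_bot.1 h)).symm

theorem DecompWith.exists_primitive_idempotents {x : RepSpace Q d K} {s : ℕ}
    {D : Fin s → Fin Q.n → ℕ} (h : DecompWith Q d K x s D) :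
    ∃ f : Fin s → endAlg x, CompleteOrthogonalIdempotents f ∧
      (∀ r, IsPrimitiveIdempotent (f r)) ∧
      ∀ r i, Module.finrank K (LinearMap.range (vertexIdem i * (f r : CarrierEnd Q d K))) =
        D r i := by
  obtain ⟨N, hstable, hdisj, htop, hind, hdim⟩ := h
  obtain ⟨f, hf, hrange, hcomm⟩ := exists_completeOrthogonalIdempotents_range_eq hdisj htop
  have hmem (r) : f r ∈ endAlg x := mem_endAlg.2
    ⟨fun i => hcomm _ (fun t => (hstable t).2 i) r, fun a => hcomm _ (fun t => (hstable t).1 a) r⟩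
  have hf' : CompleteOrthogonalIdempotents fun r => (⟨f r, hmem r⟩ : endAlg x) :=
    (CompleteOrthogonalIdempotents.map_injective_iff (endAlg x).val.toRingHom
      Subtype.val_injective).1 hf
  refine ⟨_, hf', fun r => ⟨fun h0 => (hind r).1 ?_, hf'.idem r, fun e hee hfe hef => ?_⟩,
    fun r i => ?_⟩
  · rw [← hrange r, show f r = 0 from congrArg Subtype.val h0, LinearMap.range_zero]
  · have hindr := hind r
    rw [← hrange r] at hindr
    exact (hindr.eq_zero_or_eq (hmem r) e.2 (hf.idem r) (congrArg Subtype.val hee)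
      (congrArg Subtype.val hfe) (congrArg Subtype.val hef)).imp Subtype.ext Subtype.ext
  · rw [← hdim r i, vdim, ← hrange r]
    exact congrArg (fun S : Submodule K (Carrier Q d K) => Module.finrank K S)
      (LinearMap.range_comp (f r) (proj Q d K i))

theorem DecompWith.card_le_of_orthogonalIdempotents [IsAlgClosed K] {x : RepSpace Q d K} {s : ℕ}
    {D : Fin s → Fin Q.n → ℕ} (h : DecompWith Q d K x s D) {κ : Type*} [Fintype κ]
    {e : κ → CarrierEnd Q d K} (hmem : ∀ k, e k ∈ endAlg x) (he : OrthogonalIdempotents e)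
    (hne : ∀ k, e k ≠ 0) : Fintype.card κ ≤ s := by
  obtain ⟨f, hf, hprim, -⟩ := h.exists_primitive_idempotents
  have he' : OrthogonalIdempotents fun k => (⟨e k, hmem k⟩ : endAlg x) :=
    (OrthogonalIdempotents.map_injective_iff (endAlg x).val.toRingHom Subtype.val_injective).1 he
  simpa using card_le_card_of_isPrimitiveIdempotent K hf hprim he'
    fun k h0 => hne k (congrArg Subtype.val h0)

end EndAlg

section Deformation

/-- The representation with arrow operators `X_a - (1 - ψ φ) X_a ψ`. If `φ` is an endomorphism of
`M_x` with generalized inverse `ψ` and `ψ ψ φ = 0`, it has the idempotent endomorphism `φ + ψ φ`. -/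
noncomputable def deformation (x : RepSpace Q d K) (φ ψ : CarrierEnd Q d K) : RepSpace Q d K :=
  coordsOfFamily Q d K fun a => arrowEnd x a - (1 - ψ * φ) * arrowEnd x a * ψ

variable {x : RepSpace Q d K} {g φ ψ : CarrierEnd Q d K}

lemma arrowEnd_deformation (hφ : φ ∈ gradedEnd Q d K) (hψ : ψ ∈ gradedEnd Q d K) (a) :
    arrowEnd (deformation x φ ψ) a = arrowEnd x a - (1 - ψ * φ) * arrowEnd x a * ψ :=
  congrFun (arrowFamily_coordsOfFamily (sub_mem (arrowFamily_mem x) <|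
    mul_mul_mem_arrowSpace (sub_mem (one_mem _) (mul_mem hψ hφ)) hψ (arrowFamily_mem x))) a

lemma deformation_inv_smul_smul {t : K} (ht : t ≠ 0) :
    deformation x (t⁻¹ • φ) (t • ψ) =
      x + t • coordsOfFamily Q d K fun a => -((1 - ψ * φ) * arrowEnd x a * ψ) := by
  have hadd (w : Fin Q.numArrows → CarrierEnd Q d K) :
      x + t • coordsOfFamily Q d K w = coordsOfFamily Q d K (arrowFamily Q d K x + t • w) := by
    rw [map_add, map_smul, coordsOfFamily_arrowFamily]
  rw [hadd]
  refine congrArg _ (funext fun a => ?_)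
  simp [arrowFamily_apply, smul_smul, ht, sub_eq_add_neg]

lemma mem_endAlg_deformation (hφ : φ ∈ gradedEnd Q d K) (hψ : ψ ∈ gradedEnd Q d K)
    (hg : g ∈ endAlg x) (hgφ : Commute g φ) (hgψ : Commute g ψ) :
    g ∈ endAlg (deformation x φ ψ) := by
  rw [mem_endAlg] at hg ⊢
  refine ⟨hg.1, fun a => ?_⟩
  rw [arrowEnd_deformation hφ hψ]
  exact (hg.2 a).sub_right ((((Commute.one_right _).sub_right (hgψ.mul_right hgφ)).mul_right
    (hg.2 a)).mul_right hgψ)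

lemma add_mul_mem_endAlg_deformation (hφ : φ ∈ endAlg x) (hψ : ψ ∈ gradedEnd Q d K)
    (h : φ * ψ * φ = φ) (h0 : ψ * ψ * φ = 0) : φ + ψ * φ ∈ endAlg (deformation x φ ψ) := by
  have hφ' := (mem_endAlg_iff_homDefect.1 hφ).1
  refine mem_endAlg.2 ⟨mem_gradedEnd.1 (add_mem hφ' (mul_mem hψ hφ')), fun a => ?_⟩
  rw [arrowEnd_deformation hφ' hψ]
  exact (commute_sub_mul_mul_add_mul ((mem_endAlg.1 hφ).2 a).symm h h0).symm

lemma exists_graded_mul_mul_eq_self {f : CarrierEnd Q d K} (hf : f ∈ gradedEnd Q d K)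
    (hff : IsIdempotentElem f) (hφ : φ ∈ gradedEnd Q d K) (hsq : φ * φ = 0) (hfφ : f * φ = φ)
    (hφf : φ * f = φ) :
    ∃ ψ ∈ gradedEnd Q d K, φ * ψ * φ = φ ∧ ψ * ψ * φ = 0 ∧ f * ψ = ψ ∧ ψ * f = ψ := by
  obtain ⟨χ, hχ⟩ := exists_mul_mul_eq_self φ
  have hv := completeOrthogonalIdempotents_vertexIdem (Q := Q) (d := d) (K := K)
  have hφv (i) : Commute (vertexIdem i) φ := (mem_gradedEnd.1 hφ i).symm
  let ψ := f * pinching K vertexIdem vertexIdem χ * f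
  have hψ : ψ ∈ gradedEnd Q d K := mul_mem (mul_mem hf <|
    mem_gradedEnd.2 fun i => (commute_pinching hv.toOrthogonalIdempotents χ i).symm) hf
  have hψφ : φ * ψ * φ = φ := by
    calc φ * ψ * φ = φ * f * pinching K vertexIdem vertexIdem χ * (f * φ) := by
          simp only [ψ, mul_assoc]
      _ = φ := by rw [hφf, hfφ, ← pinching_mul_mul hφv hφv, hχ, pinching_eq_self hv hφv]
  have hfψ : f * ψ = ψ := by simp only [ψ, ← mul_assoc, hff.eq]
  have hψf : ψ * f = ψ := by simp only [ψ, mul_assoc, hff.eq]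
  clear_value ψ
  obtain ⟨h1, h2⟩ := mul_mul_eq_and_mul_mul_eq_zero_of_sq_zero hsq hψφ
  refine ⟨ψ * (1 - ψ * φ), mul_mem hψ (sub_mem (one_mem _) (mul_mem hψ hφ)), h1, h2, ?_, ?_⟩
  · rw [← mul_assoc, hfψ]
  · rw [mul_assoc, sub_mul, one_mul, mul_assoc, hφf, mul_sub, hψf, mul_sub, mul_one]

section

variable [IsAlgClosed K] {s : ℕ} {f : Fin s → CarrierEnd Q d K} {r : Fin s}

-- The idempotent endomorphism `ε = φ + ψ φ` of the deformation splits `f r` without disturbing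
-- the other `f q`, which makes `s + 1` orthogonal idempotents.
theorem not_decompWith_deformation (hmem : ∀ q, f q ∈ endAlg x) (hf : OrthogonalIdempotents f)
    (hne : ∀ q, f q ≠ 0) (hφ : φ ∈ endAlg x) (hφ0 : φ ≠ 0) (hsq : φ * φ = 0)
    (hfφ : f r * φ = φ) (hφf : φ * f r = φ) (hψ : ψ ∈ gradedEnd Q d K) (h : φ * ψ * φ = φ)
    (h0 : ψ * ψ * φ = 0) (hfψ : f r * ψ = ψ) (hψf : ψ * f r = ψ) (D : Fin s → Fin Q.n → ℕ) :
    ¬ DecompWith Q d K (deformation x φ ψ) s D := fun hD => by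
  have hcφ (q) : Commute (f q) φ := commute_of_mul_eq_self hf hfφ hφf q
  have hcψ (q) : Commute (f q) ψ := commute_of_mul_eq_self hf hfψ hψf q
  have hε := add_mul_mem_endAlg_deformation hφ hψ h h0
  have hfmem (q) : f q ∈ endAlg (deformation x φ ψ) :=
    mem_endAlg_deformation (mem_endAlg_iff_homDefect.1 hφ).1 hψ (hmem q) (hcφ q) (hcψ q)
  have hcard := hD.card_le_of_orthogonalIdempotents
    (Option.forall.2 ⟨hε, fun q => mul_mem (hfmem q) (sub_mem (one_mem _) hε)⟩)
    (orthogonalIdempotents_option_mul_one_sub hf (isIdempotentElem_add_mul hsq h)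
      fun q => (hcφ q).add_right ((hcψ q).mul_right (hcφ q)))
    (optionElim_add_mul_ne_zero hf hne hφ0 hsq h hfφ hfψ)
  simp at hcard

theorem exists_forall_not_decompWith_add_smul (hmem : ∀ q, f q ∈ endAlg x)
    (hf : OrthogonalIdempotents f) (hne : ∀ q, f q ≠ 0) (hφ : φ ∈ endAlg x) (hφ0 : φ ≠ 0)
    (hsq : φ * φ = 0) (hfφ : f r * φ = φ) (hφf : φ * f r = φ) :
    ∃ z : RepSpace Q d K, ∀ t : K, t ≠ 0 → ∀ D, ¬ DecompWith Q d K (x + t • z) s D := by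
  obtain ⟨ψ, hψ, h, h0, hfψ, hψf⟩ := exists_graded_mul_mul_eq_self
    (mem_endAlg_iff_homDefect.1 (hmem r)).1 (hf.idem r) (mem_endAlg_iff_homDefect.1 hφ).1
    hsq hfφ hφf
  refine ⟨coordsOfFamily Q d K fun a => -((1 - ψ * φ) * arrowEnd x a * ψ), fun t ht D => ?_⟩
  rw [← deformation_inv_smul_smul ht]
  have hψφ : (t • ψ) * (t⁻¹ • φ) = ψ * φ := by simp [smul_smul, ht]
  refine not_decompWith_deformation hmem hf hne ((endAlg x).smul_mem hφ _)
    (smul_ne_zero (inv_ne_zero ht) hφ0) (by rw [smul_mul_smul_comm, hsq, smul_zero])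
    (by rw [mul_smul_comm, hfφ]) (by rw [smul_mul_assoc, hφf])
    ((gradedEnd Q d K).smul_mem hψ _) ?_ ?_ (by rw [mul_smul_comm, hfψ])
    (by rw [smul_mul_assoc, hψf]) D
  · rw [mul_assoc, hψφ, smul_mul_assoc, ← mul_assoc, h]
  · rw [mul_assoc, hψφ, smul_mul_assoc, ← mul_assoc, h0, smul_zero]

theorem exists_eq_smul_of_forall_decompWith {U : Set (RepSpace Q d K)} (hU : IsOpen U)
    (hxU : x ∈ U) (hdec : ∀ y ∈ U, ∃ D, DecompWith Q d K y s D) {f : Fin s → endAlg x}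
    (hf : OrthogonalIdempotents f) (hprim : ∀ q, IsPrimitiveIdempotent (f q)) {a : endAlg x}
    (hfa : f r * a = a) (haf : a * f r = a) : ∃ c : K, a = c • f r := by
  by_contra! ha
  obtain ⟨φ, hφ0, hsq, hfφ, hφf⟩ := (hprim r).exists_mul_self_eq_zero K hfa haf ha
  obtain ⟨z, hz⟩ := exists_forall_not_decompWith_add_smul (fun q => (f q).2)
    (hf.map (endAlg x).val.toRingHom) (fun q h0 => (hprim q).ne_zero (Subtype.ext h0)) φ.2
    (fun h0 => hφ0 (Subtype.ext h0)) (congrArg Subtype.val hsq) (congrArg Subtype.val hfφ)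
    (congrArg Subtype.val hφf)
  obtain ⟨t, ht, htU⟩ := zariskiTopology.exists_ne_zero_add_smul_mem hU hxU z
  obtain ⟨D, hD⟩ := hdec _ htU
  exact hz t ht D hD

end

end Deformation

end QuiverData

/-! ### Counting dimensions -/

section OrthogonalIdempotents

variable {A ι κ : Type*}

lemma orthogonalIdempotents_mul_of_commute [Semiring A] {e : κ → A} {f : ι → A}
    (he : OrthogonalIdempotents e) (hf : OrthogonalIdempotents f)
    (hcomm : ∀ r k, Commute (f r) (e k)) :
    OrthogonalIdempotents fun p : ι × κ => e p.2 * f p.1 := by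
  classical
  refine OrthogonalIdempotents.iff_mul_eq.2 fun ⟨r, k⟩ ⟨r', k'⟩ => ?_
  calc e k * f r * (e k' * f r') = e k * e k' * (f r * f r') := by
        rw [mul_assoc, ← mul_assoc (f r), (hcomm r k').eq, mul_assoc, ← mul_assoc]
    _ = if (r, k) = (r', k') then e k * f r else 0 := by
        rw [he.mul_eq, hf.mul_eq]
        split_ifs <;> simp_all

lemma linearIndependent_of_orthogonalIdempotents (K : Type*) [Field K] [Ring A]
    [Algebra K A] {f : ι → A} (hf : OrthogonalIdempotents f) (hne : ∀ r, f r ≠ 0) :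
    LinearIndependent K f := by
  classical
  refine linearIndependent_iff'.2 fun t c hc r hr => ?_
  have h : c r • f r = 0 := by
    have h' : (∑ q ∈ t, c q • f q) * f r = 0 := by rw [hc, zero_mul]
    simpa [Finset.sum_mul, hf.mul_eq, hr] using h'
  exact (smul_eq_zero.1 h).resolve_right (hne r)

lemma mem_span_range_of_commute {K : Type*} [CommSemiring K] [Semiring A] [Algebra K A]
    [Fintype ι] {f : ι → A} (hf : CompleteOrthogonalIdempotents f)
    (hbrick : ∀ r, ∀ a : A, f r * a = a → a * f r = a → ∃ c : K, a = c • f r) {w : A}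
    (hw : ∀ r, Commute (f r) w) : w ∈ Submodule.span K (Set.range f) := by
  have hscalar (r) : ∃ c : K, f r * w = c • f r :=
    hbrick r _ (by rw [← mul_assoc, hf.idem r]) (by rw [mul_assoc, ← hw, ← mul_assoc, hf.idem r])
  choose c hc using hscalar
  rw [← one_mul w, ← hf.complete, Finset.sum_mul]
  refine sum_mem fun r _ => ?_
  rw [hc]
  exact Submodule.smul_mem _ _ (Submodule.subset_span ⟨r, rfl⟩)

end OrthogonalIdempotents

namespace QuiverData

attribute [local instance] zariskiTopology

variable {Q : QuiverData} {d : Fin Q.n → ℕ} {K : Type} [Field K]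

section Blocks

variable {s : ℕ} {f : Fin s → CarrierEnd Q d K} {x : RepSpace Q d K}

/-- The block-diagonal part, with respect to idempotents `f r`, of a family of operators. -/
noncomputable def familyPinching (f : Fin s → CarrierEnd Q d K) :
    (Fin Q.numArrows → CarrierEnd Q d K) →ₗ[K] Fin Q.numArrows → CarrierEnd Q d K :=
  LinearMap.pi fun a => pinching K f f ∘ₗ LinearMap.proj a

lemma familyPinching_apply (z : Fin Q.numArrows → CarrierEnd Q d K) (a) :
    familyPinching f z a = pinching K f f (z a) := rfl

lemma range_pinching_vertexIdem :
    LinearMap.range (pinching K vertexIdem vertexIdem) =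
      Subalgebra.toSubmodule (gradedEnd Q d K) := by
  have hv := completeOrthogonalIdempotents_vertexIdem (Q := Q) (d := d) (K := K)
  ext g
  refine ⟨?_, fun hg => ⟨g, pinching_eq_self hv fun i => (mem_gradedEnd.1 hg i).symm⟩⟩
  rintro ⟨z, rfl⟩
  exact mem_gradedEnd.2 fun i => (commute_pinching hv.toOrthogonalIdempotents z i).symm

lemma map_familyPinching_arrowSpace :
    (arrowSpace Q d K).map (familyPinching f) =
      LinearMap.range (LinearMap.pi fun a => pinching K (fun r => f r * vertexIdem (Q.tgt a))
        (fun r => vertexIdem (Q.src a) * f r) ∘ₗ LinearMap.proj a) := by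
  have hblock (w : Fin Q.numArrows → CarrierEnd Q d K) :
      familyPinching f (fun a => vertexIdem (Q.tgt a) * w a * vertexIdem (Q.src a)) =
        LinearMap.pi (fun a => pinching K (fun r => f r * vertexIdem (Q.tgt a))
          (fun r => vertexIdem (Q.src a) * f r) ∘ₗ LinearMap.proj a) w := funext fun a => by
    simp only [familyPinching_apply, pinching_apply, LinearMap.pi_apply, LinearMap.comp_apply,
      LinearMap.proj_apply, mul_assoc]
  have hidem (i : Fin Q.n) := (completeOrthogonalIdempotents_vertexIdem (d := d) (K := K)).idem i
  ext w
  constructor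
  · rintro ⟨z, hz, rfl⟩
    exact ⟨z, by rw [← hblock, funext hz]⟩
  · rintro ⟨z, rfl⟩
    refine ⟨_, fun a => ?_, hblock z⟩
    simp only [← mul_assoc, (hidem _).eq]
    simp only [mul_assoc, (hidem _).eq]

variable {D : Fin s → Fin Q.n → ℕ}

lemma finrank_map_pinching_gradedEnd (hf : OrthogonalIdempotents f)
    (hmem : ∀ r, f r ∈ gradedEnd Q d K)
    (hdim : ∀ r i, Module.finrank K (LinearMap.range (vertexIdem i * f r)) = D r i) :
    Module.finrank K ((Subalgebra.toSubmodule (gradedEnd Q d K)).map (pinching K f f)) =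
      ∑ r, eulerHomPart Q (D r) (D r) := by
  have hcomm (r i) : Commute (f r) (vertexIdem i) := mem_gradedEnd.1 (hmem r) i
  have horth := orthogonalIdempotents_mul_of_commute
    completeOrthogonalIdempotents_vertexIdem.toOrthogonalIdempotents hf hcomm
  have hfun : (fun p : Fin s × Fin Q.n => f p.1 * vertexIdem p.2) =
      fun p => vertexIdem p.2 * f p.1 := funext fun p => hcomm p.1 p.2
  rw [← range_pinching_vertexIdem, ← LinearMap.range_comp, pinching_comp_pinching, hfun,
    finrank_range_pinching horth.idem horth, Fintype.sum_prod_type]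
  simp only [hdim, eulerHomPart]

lemma finrank_map_familyPinching_arrowSpace (hf : OrthogonalIdempotents f)
    (hmem : ∀ r, f r ∈ gradedEnd Q d K)
    (hdim : ∀ r i, Module.finrank K (LinearMap.range (vertexIdem i * f r)) = D r i) :
    Module.finrank K ((arrowSpace Q d K).map (familyPinching f)) =
      ∑ r, eulerExtPart Q (D r) (D r) := by
  have hcomm (r i) : Commute (f r) (vertexIdem i) := mem_gradedEnd.1 (hmem r) i
  have horth (i) : OrthogonalIdempotents fun r => vertexIdem i * f r :=
    (orthogonalIdempotents_mul_of_commute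
      completeOrthogonalIdempotents_vertexIdem.toOrthogonalIdempotents hf hcomm).embedding
      ⟨(·, i), Prod.mk_left_injective i⟩
  have hfun (i) : (fun r => f r * vertexIdem i) = fun r => vertexIdem i * f r :=
    funext fun r => hcomm r i
  have hblock (i j) : Module.finrank K (LinearMap.range
      (pinching K (fun r => f r * vertexIdem i) fun r => vertexIdem j * f r)) =
        ∑ r, D r j * D r i := by
    rw [hfun, finrank_range_pinching (horth i).idem (horth j)]
    simp only [hdim, mul_comm]
  rw [map_familyPinching_arrowSpace, finrank_range_pi_comp_proj,
    Finset.sum_congr rfl fun a _ => hblock _ _]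
  exact Finset.sum_comm

lemma map_familyPinching_tangentSpace (hmem : ∀ r, f r ∈ endAlg x) :
    (tangentSpace x).map (familyPinching f) =
      ((Subalgebra.toSubmodule (gradedEnd Q d K)).map (pinching K f f)).map (homDefect x x) := by
  rw [tangentSpace, ← Submodule.map_comp, ← Submodule.map_comp]
  congr 1
  refine LinearMap.ext fun g => funext fun a => ?_
  have hcomm (r) : Commute (f r) (arrowEnd x a) := (mem_endAlg.1 (hmem r)).2 a
  have hright := pinching_mul_mul (K := K) (fun r => Commute.one_right (f r)) hcomm g
  have hleft := pinching_mul_mul (K := K) hcomm (fun r => Commute.one_right (f r)) g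
  rw [one_mul, one_mul] at hright
  rw [mul_one, mul_one] at hleft
  simp only [LinearMap.comp_apply, familyPinching_apply, homDefect_apply, map_sub, hright, hleft]

-- Off the diagonal `z` is the sum over `r` of `f r z (1 - f r)`, which is the derivative of
-- `f r X - X f r` in the direction `z (1 - f r)`.
lemma arrowSpace_inf_ker_familyPinching [Infinite K]
    (hx : ∀ y : RepSpace Q d K, orbitRank y ≤ orbitRank x) (hf : CompleteOrthogonalIdempotents f)
    (hmem : ∀ r, f r ∈ endAlg x) :
    arrowSpace Q d K ⊓ LinearMap.ker (familyPinching f) =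
      tangentSpace x ⊓ LinearMap.ker (familyPinching f) := by
  refine le_antisymm (fun z hz => ⟨?_, hz.2⟩) (inf_le_inf_right _ (tangentSpace_le_arrowSpace x))
  have hmem' (r) : f r ∈ gradedEnd Q d K ∧ homDefect x x (f r) = 0 :=
    mem_endAlg_iff_homDefect.1 (hmem r)
  have hz0 (a) : (∑ r, f r * z a * f r) = 0 := by
    rw [← pinching_apply (K := K)]; exact congrFun hz.2 a
  have hsum : z = ∑ r, fun a => f r * z a * (1 - f r) := funext fun a => by
    rw [Finset.sum_apply]
    simp only [mul_sub, mul_one, Finset.sum_sub_distrib, hz0, sub_zero, ← Finset.sum_mul,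
      hf.complete, one_mul]
  rw [hsum]
  refine sum_mem fun r _ => ?_
  have hw : (fun a => z a * (1 - f r)) ∈ arrowSpace Q d K := by
    simpa only [one_mul] using mul_mul_mem_arrowSpace (one_mem _)
      (sub_mem (one_mem _) (hmem' r).1) hz.1
  convert homDefect_mem_tangentSpace hx (coordsOfFamily Q d K fun a => z a * (1 - f r))
    (hmem' r).1 (hmem' r).2 using 1
  funext a
  rw [homDefect_apply, ← arrowFamily_apply, arrowFamily_coordsOfFamily hw, mul_assoc, mul_assoc,
    (hf.idem r).one_sub_mul_self, mul_zero, sub_zero]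

end Blocks

section Count

variable {s : ℕ} {x : RepSpace Q d K} {f : Fin s → endAlg x}

lemma map_pinching_inf_ker_homDefect (hf : CompleteOrthogonalIdempotents f)
    (hbrick : ∀ r, ∀ a : endAlg x, f r * a = a → a * f r = a → ∃ c : K, a = c • f r) :
    (Subalgebra.toSubmodule (gradedEnd Q d K)).map
        (pinching K (fun r => (f r : CarrierEnd Q d K)) fun r => f r) ⊓
      LinearMap.ker (homDefect x x) =
        Submodule.span K (Set.range fun r => (f r : CarrierEnd Q d K)) := by
  have hf' := hf.map (endAlg x).val.toRingHom
  have hgraded (r) : (f r : CarrierEnd Q d K) ∈ gradedEnd Q d K :=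
    (mem_endAlg_iff_homDefect.1 (f r).2).1
  refine le_antisymm ?_ (Submodule.span_le.2 ?_)
  · rintro _ ⟨⟨g, hg, rfl⟩, h0⟩
    set w := pinching K (fun r => (f r : CarrierEnd Q d K)) (fun r => f r) g with hw
    have hwx : w ∈ endAlg x := by
      refine mem_endAlg_iff_homDefect.2 ⟨?_, h0⟩
      rw [hw, pinching_apply]
      exact sum_mem fun r _ => mul_mem (mul_mem (hgraded r) hg) (hgraded r)
    have hcomm (r) : Commute (f r) ⟨w, hwx⟩ :=
      Subtype.ext (commute_pinching hf'.toOrthogonalIdempotents g r)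
    have hspan : (⟨w, hwx⟩ : endAlg x) ∈ Submodule.span K (Set.range f) :=
      mem_span_range_of_commute hf hbrick hcomm
    have hmap := Submodule.mem_map_of_mem (f := (endAlg x).val.toLinearMap) hspan
    rwa [Submodule.map_span, ← Set.range_comp] at hmap
  · rintro _ ⟨r, rfl⟩
    refine ⟨⟨f r, hgraded r, pinching_eq_self hf' fun k => ?_⟩,
      (mem_endAlg_iff_homDefect.1 (f r).2).2⟩
    exact commute_of_mul_eq_self hf'.toOrthogonalIdempotents (hf'.idem r) (hf'.idem r) k

-- Passing to block-diagonal parts does not change the codimension of the tangent space, and the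
-- block-diagonal endomorphisms of `M_x` are only scalars, one for each of the `s` blocks.
theorem card_coords_add_sum_eulerHomPart [Infinite K] {D : Fin s → Fin Q.n → ℕ}
    (hx : ∀ y : RepSpace Q d K, orbitRank y ≤ orbitRank x)
    (hf : CompleteOrthogonalIdempotents f) (hne : ∀ r, f r ≠ 0)
    (hdim : ∀ r i, Module.finrank K (LinearMap.range
      (vertexIdem i * (f r : CarrierEnd Q d K))) = D r i)
    (hbrick : ∀ r, ∀ a : endAlg x, f r * a = a → a * f r = a → ∃ c : K, a = c • f r) :
    Fintype.card (Coords Q d) + ∑ r, eulerHomPart Q (D r) (D r) =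
      orbitRank x + (s + ∑ r, eulerExtPart Q (D r) (D r)) := by
  let F (r) : CarrierEnd Q d K := f r
  have hF : CompleteOrthogonalIdempotents F := hf.map (endAlg x).val.toRingHom
  have hgraded (r) : F r ∈ gradedEnd Q d K := (mem_endAlg_iff_homDefect.1 (f r).2).1
  have hli : LinearIndependent K F := linearIndependent_of_orthogonalIdempotents K
    hF.toOrthogonalIdempotents fun r h0 => hne r (Subtype.ext h0)
  have harrow := finrank_map_add_finrank_inf_ker (arrowSpace Q d K) (familyPinching F)
  have htangent := finrank_map_add_finrank_inf_ker (tangentSpace x) (familyPinching F)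
  have hgraded' := finrank_map_add_finrank_inf_ker
    ((Subalgebra.toSubmodule (gradedEnd Q d K)).map (pinching K F F)) (homDefect x x)
  rw [finrank_arrowSpace, finrank_map_familyPinching_arrowSpace hF.toOrthogonalIdempotents hgraded
    hdim, arrowSpace_inf_ker_familyPinching (f := F) hx hF fun r => (f r).2] at harrow
  rw [map_familyPinching_tangentSpace (f := F) fun r => (f r).2] at htangent
  rw [finrank_map_pinching_gradedEnd hF.toOrthogonalIdempotents hgraded hdim,
    map_pinching_inf_ker_homDefect hf hbrick, finrank_span_eq_card hli, Fintype.card_fin]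
    at hgraded'
  rw [orbitRank]
  omega

end Count

end QuiverData

open QuiverData in
theorem statement_7_general (K : Type) [Field K] [IsAlgClosed K]
    (Q : QuiverData) (d : Fin Q.n → ℕ) (s : ℕ) (D : Fin s → Fin Q.n → ℕ)
    (hcan : ∃ U : Set (RepSpace Q d K), IsOpen U ∧ Dense U ∧
      ∀ x ∈ U, DecompWith Q d K x s D) :
    (topologicalKrullDim (RepSpace Q d K) +
        ((∑ r, eulerHomPart Q (D r) (D r) : ℕ∞) : WithBot ℕ∞)
      = (⨆ x : RepSpace Q d K, topologicalKrullDim ↥(orbitSet Q d K x)) +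
        (((s + ∑ r, eulerExtPart Q (D r) (D r) : ℕ) : ℕ∞) : WithBot ℕ∞)) ∧
    ((∃ x : RepSpace Q d K, Dense (orbitSet Q d K x)) ↔
      s + ∑ r, eulerExtPart Q (D r) (D r) = ∑ r, eulerHomPart Q (D r) (D r)) := by
  obtain ⟨U, hU, hUd, hdec⟩ := hcan
  obtain ⟨x, hxU, hx⟩ := exists_mem_forall_orbitRank_le hUd
  obtain ⟨f, hf, hprim, hdim⟩ := (hdec x hxU).exists_primitive_idempotents
  have hcount := card_coords_add_sum_eulerHomPart hx hf (fun r => (hprim r).ne_zero) hdim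
    fun r a hfa haf => exists_eq_smul_of_forall_decompWith hU hxU (fun y hy => ⟨D, hdec y hy⟩)
      hf.toOrthogonalIdempotents hprim hfa haf
  constructor
  · rw [zariskiTopology.topologicalKrullDim_eq_card, iSup_topologicalKrullDim_orbitSet hx]
    exact_mod_cast hcount
  · have hle := orbitRank_le_card x
    simp only [dense_orbitSet_iff]
    constructor
    · rintro ⟨y, hy⟩
      have hyx := hx y
      omega
    · exact fun h => ⟨x, by omega⟩

open QuiverData in
/-- Kac. Let `d = ∑ d^{(r)}` be the canonical decomposition of `d` for
the acyclic quiver `Q`. Then the generic number of parameters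
`μ(d) = dim Rep_d(KQ) − max_x dim GL(d)·x` equals `∑_r (1 − ⟨d^{(r)}, d^{(r)}⟩)`, stated
additively (writing the Euler form as `⟨e,e⟩ = eulerHomPart e e − eulerExtPart e e`):
`dim Rep_d(KQ) + ∑_r ⟨d^{(r)},d^{(r)}⟩⁻-part = (⨆_x dim orbit x) + s + ∑_r ext-part`.
In particular `Rep_d(KQ)` has a dense `GL(d)`-orbit iff `∑_r (1 − ⟨d^{(r)}, d^{(r)}⟩) = 0`. -/
theorem statement_7 (K : Type) [Field K] [IsAlgClosed K]
    (Q : QuiverData) (hacyc : Acyclic Q)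
    (d : Fin Q.n → ℕ) (s : ℕ) (D : Fin s → Fin Q.n → ℕ)
    (hsum : ∀ i, d i = ∑ r, D r i)
    (hcan : ∃ U : Set (RepSpace Q d K), IsOpen U ∧ Dense U ∧
      ∀ x ∈ U, DecompWith Q d K x s D) :
    (topologicalKrullDim (RepSpace Q d K) +
        ((∑ r, eulerHomPart Q (D r) (D r) : ℕ∞) : WithBot ℕ∞)
      = (⨆ x : RepSpace Q d K, topologicalKrullDim ↥(orbitSet Q d K x)) +
        (((s + ∑ r, eulerExtPart Q (D r) (D r) : ℕ) : ℕ∞) : WithBot ℕ∞)) ∧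
    ((∃ x : RepSpace Q d K, Dense (orbitSet Q d K x)) ↔
      s + ∑ r, eulerExtPart Q (D r) (D r) = ∑ r, eulerHomPart Q (D r) (D r)) :=
  statement_7_general K Q d s D hcan
end

section
/- Let Q be a finite quiver in which the lengths of all paths are bounded by L, let K be an algebraically closed field and d a dimension vector, and let S(d) = (S_0,…,S_L) be the generic radical layering of the modules in Rep_d(KQ), i.e., the minimal value of the upper semicontinuous map x ↦ S(M_x), attained on a dense open subset of Rep_d(KQ). Then the dimension vectors t^{(l)} = dim S_l satisfy the recursion t^{(0)} = sup{0, d − d·A} and t^{(l+1)} = sup{0, (d − Σ_{i≤l} t^{(i)}) − (d − Σ_{i≤l} t^{(i)})·A} for 0 ≤ l ≤ L−1, where the suprema are componentwise in Z^n and A is the adjacency matrix of Q. -/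
open Finset

/-!
Since the arrows of `Q` ending at `i` map `⨁_{tgt a = i} (J^l M)_{src a}` onto `(J^{l+1} M)_i`,
and `J^{l+1} M ⊆ J^l M`, the dimension vectors of the radical powers of every `d`-dimensional
representation `M` satisfy `dim J^l M ≤ ρ_l`, where `ρ_0 = d` and `ρ_{l+1} = inf {ρ_l, ρ_l·A}`.
One representation attains all these bounds at once: at each vertex `i`, enumerate the basis
vectors entering `i` so that, for every `l`, those belonging to the first `ρ_l` basis vectors of
their vertex precede the others, and map the `k`-th of them to the `k`-th basis vector at `i`.
Hence the minimal layering satisfies `t^{(0)} + ⋯ + t^{(l)} = d - ρ_{l+1}`, and the recursion for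
`ρ` becomes the one for `t`.
-/

section FiniteSums

variable {M : Type*} [AddCommMonoid M]

theorem sum_range_tsub_add_of_antitone [PartialOrder M] [Sub M] [OrderedSub M] [AddLeftMono M]
    [ExistsAddOfLE M] {f : ℕ → M} (hf : Antitone f) (n : ℕ) :
    ∑ m ∈ range n, (f m - f (m + 1)) + f n = f 0 := by
  induction n with
  | zero => simp
  | succ n ih => rw [sum_range_succ, add_assoc, tsub_add_cancel_of_le (hf n.le_succ), ih]

theorem sum_fin_filter_le {n : ℕ} (f : ℕ → M) (l : Fin n) :
    ∑ j : Fin n with j ≤ l, f j = ∑ m ∈ range (l + 1), f m := by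
  rw [filter_ge_eq_Iic, Nat.range_succ_eq_Iic, ← Fin.map_valEmbedding_Iic, sum_map]
  rfl

end FiniteSums

section Enumeration

variable {B : Type*}

theorem exists_eqOn_image_union_eq_range [DecidableEq B] {t : Finset B} {ν : B → ℕ}
    (hν : t.image ν = range #t) (u : Finset B) :
    ∃ μ : B → ℕ, Set.EqOn μ ν t ∧ (t ∪ u).image μ = range #(t ∪ u) := by
  induction u using Finset.induction_on with
  | empty => exact ⟨ν, Set.eqOn_refl ν t, by simpa using hν⟩
  | insert b u _ ih =>
    obtain ⟨μ, hμν, hμ⟩ := ih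
    by_cases hb : b ∈ t ∪ u
    · exact ⟨μ, hμν, by rwa [union_insert, insert_eq_of_mem hb]⟩
    · have h_ne : ∀ c ∈ t ∪ u, c ≠ b := fun c hc => ne_of_mem_of_not_mem hc hb
      have h_old : Set.EqOn (Function.update μ b #(t ∪ u)) μ (t ∪ u : Finset B) := fun c hc =>
        Function.update_of_ne (h_ne c hc) _ _
      refine ⟨Function.update μ b #(t ∪ u), ?_, ?_⟩
      · exact (h_old.mono (coe_subset.2 subset_union_left)).trans hμν
      · rw [union_insert, image_insert, image_congr h_old, hμ, Function.update_self,
          card_insert_of_notMem hb, range_add_one]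

theorem exists_image_eq_range_card_of_antitone {G : ℕ → Finset B} (hG : Antitone G) :
    ∃ ν : B → ℕ, ∀ l, (G l).image ν = range #(G l) := by
  classical
  -- Induct on `G 0`: enumerate the tail of the chain from its first drop on, then extend to `G 0`.
  induction hs : G 0 using Finset.strongInduction generalizing G with
  | H s ih =>
    subst hs
    by_cases h_drop : ∃ l, G l ≠ G 0
    · have h_ssub : G (Nat.find h_drop) ⊂ G 0 :=
        (hG (Nat.zero_le _)).ssubset_of_ne (Nat.find_spec h_drop)
      obtain ⟨ν, hν⟩ := ih _ h_ssub (G := fun l => G (Nat.find h_drop + l))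
        (fun l m hlm => hG (Nat.add_le_add_left hlm _)) rfl
      obtain ⟨μ, hμν, hμ⟩ := exists_eqOn_image_union_eq_range (hν 0) (G 0)
      rw [Nat.add_zero] at hμν hμ
      rw [union_eq_right.2 h_ssub.subset] at hμ
      refine ⟨μ, fun l => ?_⟩
      rcases lt_or_ge l (Nat.find h_drop) with hl | hl
      · rwa [not_not.1 (Nat.find_min h_drop hl)]
      · obtain ⟨m, rfl⟩ := Nat.exists_eq_add_of_le hl
        rw [image_congr (hμν.mono (coe_subset.2 (hG hl))), hν m]
    · push Not at h_drop
      obtain ⟨μ, -, hμ⟩ := exists_eqOn_image_union_eq_range (t := ∅) (ν := 0) rfl (G 0)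
      exact ⟨μ, fun l => by rwa [h_drop l, ← empty_union (G 0)]⟩

end Enumeration

theorem finrank_biSup_le_sum {K V ι : Type*} [DivisionRing K] [AddCommGroup V] [Module K V]
    [FiniteDimensional K V] (s : Finset ι) (p : ι → Submodule K V) :
    Module.finrank K ↥(⨆ a ∈ s, p a) ≤ ∑ a ∈ s, Module.finrank K (p a) := by
  classical
  induction s using Finset.induction_on with
  | empty => simp
  | insert a s ha ih =>
    rw [Finset.iSup_insert, sum_insert ha]
    exact (Submodule.finrank_add_le_finrank_add_finrank (p a) (⨆ b ∈ s, p b)).trans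
      (Nat.add_le_add_left ih _)

namespace QuiverData

section GenericRadDim

variable {Q : QuiverData}

/-- The row vector `e·A` for a dimension vector `e`, where `A` is the adjacency matrix of `Q`: the
`ℕ`-valued counterpart of `inflowZ`. -/
def inflow (Q : QuiverData) (e : Fin Q.n → ℕ) (i : Fin Q.n) : ℕ :=
  ∑ a with Q.tgt a = i, e (Q.src a)

theorem inflow_mono {e f : Fin Q.n → ℕ} (h : e ≤ f) : inflow Q e ≤ inflow Q f :=
  fun _ => sum_le_sum fun _ _ => h _

theorem inflowZ_natCast (e : Fin Q.n → ℕ) (i : Fin Q.n) :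
    inflowZ Q (fun j => (e j : ℤ)) i = inflow Q e i := by
  simp only [inflowZ, inflow, Nat.cast_sum]

/-- The dimension vector `ρ_l` of `J^l M` for a generic `d`-dimensional representation `M`, given by
`ρ_0 = d` and `ρ_{l+1} = inf {ρ_l, ρ_l·A}`. -/
def genericRadDim (Q : QuiverData) (d : Fin Q.n → ℕ) : ℕ → Fin Q.n → ℕ
  | 0 => d
  | l + 1 => genericRadDim Q d l ⊓ inflow Q (genericRadDim Q d l)

theorem genericRadDim_succ_apply (d : Fin Q.n → ℕ) (l : ℕ) (i : Fin Q.n) :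
    genericRadDim Q d (l + 1) i =
      min (genericRadDim Q d l i) (inflow Q (genericRadDim Q d l) i) :=
  rfl

theorem genericRadDim_antitone (d : Fin Q.n → ℕ) : Antitone (genericRadDim Q d) :=
  antitone_nat_of_succ_le fun _ => inf_le_left

theorem cumLayer_eq_sub_genericRadDim (d : Fin Q.n → ℕ) (l : ℕ) (i : Fin Q.n) :
    cumLayer Q (fun j => (d j : ℤ)) l i = d i - genericRadDim Q d (l + 1) i := by
  induction l generalizing i with
  | zero =>
    rw [genericRadDim_succ_apply]
    simp only [cumLayer, genericRadDim, inflowZ_natCast]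
    omega
  | succ l ih =>
    have h_rest : (fun j => (d j : ℤ) - cumLayer Q (fun j => (d j : ℤ)) l j) =
        fun j => (genericRadDim Q d (l + 1) j : ℤ) := by
      funext j
      rw [ih, sub_sub_cancel]
    simp only [cumLayer, h_rest]
    rw [inflowZ_natCast, ih, genericRadDim_succ_apply d (l + 1)]
    omega

theorem cumLayer_sub_cumLayer_pred (d : Fin Q.n → ℕ) (l : ℕ) (i : Fin Q.n) :
    (cumLayer Q (fun j => (d j : ℤ)) l i -
        if l = 0 then 0 else cumLayer Q (fun j => (d j : ℤ)) (l - 1) i) =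
      genericRadDim Q d l i - genericRadDim Q d (l + 1) i := by
  rcases l with _ | l
  · simp [cumLayer_eq_sub_genericRadDim, genericRadDim]
  · simp [cumLayer_eq_sub_genericRadDim]

end GenericRadDim

variable {Q : QuiverData} {d : Fin Q.n → ℕ} {K : Type} [Field K]

section VertexDimension

theorem vdim_mono {M N : Submodule K (Carrier Q d K)} (h : M ≤ N) :
    vdim Q d K M ≤ vdim Q d K N :=
  fun _ => Submodule.finrank_mono (Submodule.map_mono h)

theorem map_proj_spanSubset (S : Set (Σ i : Fin Q.n, Fin (d i))) (i : Fin Q.n) :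
    (Pi.spanSubset K S).map (proj Q d K i) = Pi.spanSubset K (S ∩ {p | p.1 = i}) := by
  ext m
  simp only [Submodule.mem_map, Pi.mem_spanSubset_iff]
  constructor
  · rintro ⟨m, hm, rfl⟩ p hp
    by_cases hpi : p.1 = i
    · simp [proj, hm p fun hpS => hp ⟨hpS, hpi⟩]
    · simp [proj, hpi]
  · intro hm
    refine ⟨m, fun p hp => hm p fun hpS => hp hpS.1, funext fun p => ?_⟩
    by_cases hpi : p.1 = i
    · simp [proj, hpi]
    · simp [proj, hpi, hm p fun hpS => hpi hpS.2]

/-- The indices of the first `e i` standard basis vectors at each vertex `i`. -/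
def initialSegment (d e : Fin Q.n → ℕ) : Set (Σ i : Fin Q.n, Fin (d i)) :=
  {p | (p.2 : ℕ) < e p.1}

theorem initialSegment_mono {e f : Fin Q.n → ℕ} (h : e ≤ f) :
    initialSegment d e ⊆ initialSegment d f :=
  fun p (hp : (p.2 : ℕ) < e p.1) => hp.trans_le (h p.1)

theorem vdim_spanSubset_initialSegment {e : Fin Q.n → ℕ} {i : Fin Q.n} (he : e i ≤ d i) :
    vdim Q d K (Pi.spanSubset K (initialSegment d e)) i = e i := by
  have h_vertex : initialSegment d e ∩ {p | p.1 = i} =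
      Sigma.mk i '' ({v : Fin (d i) | v < e i} : Finset (Fin (d i))) := by
    ext ⟨j, v⟩
    constructor
    · rintro ⟨hv, rfl⟩
      exact ⟨v, by simpa [initialSegment] using hv, rfl⟩
    · rintro ⟨w, hw, h⟩
      obtain ⟨rfl, h⟩ := Sigma.mk.inj h
      obtain rfl := eq_of_heq h
      exact ⟨by simpa [initialSegment] using hw, rfl⟩
  rw [vdim, map_proj_spanSubset, Pi.dim_spanSubset, h_vertex,
    Set.ncard_image_of_injective _ sigma_mk_injective, Set.ncard_coe_finset,
    Fin.card_filter_val_lt, min_eq_right he]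

theorem spanSubset_initialSegment_self : Pi.spanSubset K (initialSegment d d) = ⊤ := by
  refine eq_top_iff.2 fun m _ => Pi.mem_spanSubset_iff.2 fun p hp => ?_
  exact absurd p.2.isLt hp

theorem vdim_top (i : Fin Q.n) : vdim Q d K ⊤ i = d i := by
  rw [← spanSubset_initialSegment_self, vdim_spanSubset_initialSegment le_rfl]

end VertexDimension

section RadicalPowers

variable (x : RepSpace Q d K)

theorem radPow_zero : radPow Q d K x 0 = ⊤ := by
  refine eq_top_iff.2 (le_iSup_of_le ⟨[], rfl⟩ ?_)
  simp [wordMap, Module.End.one_eq_id]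

theorem range_wordMap_cons (a : Fin Q.numArrows) (w : List (Fin Q.numArrows)) :
    (wordMap Q d K x (a :: w)).range = (wordMap Q d K x w).range.map (arrowMap Q d K x a) := by
  simp only [wordMap, List.map_cons, List.prod_cons, Module.End.mul_eq_comp, LinearMap.range_comp]

theorem radPow_succ (l : ℕ) :
    radPow Q d K x (l + 1) = ⨆ a, (radPow Q d K x l).map (arrowMap Q d K x a) := by
  simp only [radPow, Submodule.map_iSup, ← range_wordMap_cons]
  apply le_antisymm
  · refine iSup_le ?_
    rintro ⟨_ | ⟨a, w⟩, hw⟩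
    · simp at hw
    · exact le_iSup_of_le a (le_iSup_of_le ⟨w, by simpa using hw⟩ le_rfl)
  · exact iSup₂_le fun a w => le_iSup_of_le ⟨a :: w.1, by simp [w.2]⟩ le_rfl

theorem radPow_antitone : Antitone (radPow Q d K x) := by
  refine antitone_nat_of_succ_le fun l => ?_
  induction l with
  | zero => exact (radPow_zero x).symm ▸ le_top
  | succ l ih =>
    calc radPow Q d K x (l + 1 + 1)
        = ⨆ a, (radPow Q d K x (l + 1)).map (arrowMap Q d K x a) := radPow_succ x (l + 1)
      _ ≤ ⨆ a, (radPow Q d K x l).map (arrowMap Q d K x a) :=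
          iSup_mono fun a => Submodule.map_mono ih
      _ = radPow Q d K x (l + 1) := (radPow_succ x l).symm

theorem arrowMap_comp_proj_src (a : Fin Q.numArrows) :
    arrowMap Q d K x a ∘ₗ proj Q d K (Q.src a) = arrowMap Q d K x a := by
  ext m p
  simp [arrowMap, proj]

theorem proj_comp_arrowMap_of_ne {a : Fin Q.numArrows} {i : Fin Q.n} (h : Q.tgt a ≠ i) :
    proj Q d K i ∘ₗ arrowMap Q d K x a = 0 := by
  refine LinearMap.ext fun m => funext fun p => ?_
  by_cases hp : p.1 = i
  · simp [proj, arrowMap, hp, h.symm]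
  · simp [proj, hp]

theorem vdim_iSup_map_arrowMap_le (N : Submodule K (Carrier Q d K)) (i : Fin Q.n) :
    vdim Q d K (⨆ a, N.map (arrowMap Q d K x a)) i ≤ inflow Q (vdim Q d K N) i := by
  have h_le : (⨆ a, N.map (arrowMap Q d K x a)).map (proj Q d K i) ≤
      ⨆ a ∈ ({a | Q.tgt a = i} : Finset (Fin Q.numArrows)),
        (N.map (proj Q d K (Q.src a))).map (proj Q d K i ∘ₗ arrowMap Q d K x a) := by
    rw [Submodule.map_iSup]
    refine iSup_le fun a => ?_
    by_cases h : Q.tgt a = i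
    · refine le_iSup₂_of_le a (by simpa using h) (le_of_eq ?_)
      rw [← Submodule.map_comp, ← Submodule.map_comp, LinearMap.comp_assoc, arrowMap_comp_proj_src]
    · rw [← Submodule.map_comp, proj_comp_arrowMap_of_ne x h, Submodule.map_zero]
      exact bot_le
  calc vdim Q d K (⨆ a, N.map (arrowMap Q d K x a)) i
      ≤ _ := Submodule.finrank_mono h_le
    _ ≤ _ := finrank_biSup_le_sum _ _
    _ ≤ inflow Q (vdim Q d K N) i := sum_le_sum fun a _ => Submodule.finrank_map_le _ _

theorem vdim_radPow_le_genericRadDim (l : ℕ) :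
    vdim Q d K (radPow Q d K x l) ≤ genericRadDim Q d l := by
  induction l with
  | zero => exact fun i => (radPow_zero x).symm ▸ (vdim_top i).le
  | succ l ih =>
    refine le_inf ((vdim_mono (radPow_antitone x l.le_succ)).trans ih) fun i => ?_
    rw [radPow_succ]
    exact (vdim_iSup_map_arrowMap_le x _ i).trans (inflow_mono ih i)

end RadicalPowers

section MonomialRepresentations

/-- The representation in which the arrow `a` sends the `w`-th standard basis vector at its source
to the `ν ⟨a, w⟩`-th one at its target, or to `0` if `ν ⟨a, w⟩` is not less than the dimension
there. -/
def monomialRep (K : Type) [Field K] (ν : (Σ a, Fin (d (Q.src a))) → ℕ) : RepSpace Q d K :=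
  fun c => if ν ⟨c.1, c.2.2⟩ = c.2.1 then 1 else 0

theorem arrowMap_single (x : RepSpace Q d K) (a : Fin Q.numArrows) (w : Fin (d (Q.src a))) :
    arrowMap Q d K x a (Pi.single ⟨Q.src a, w⟩ 1) = fun p =>
      if h : p.1 = Q.tgt a then x ⟨a, (Fin.cast (congrArg d h) p.2, w)⟩ else 0 := by
  funext p
  simp [arrowMap, Pi.single_apply]

theorem arrowMap_monomialRep_single {ν : (Σ a, Fin (d (Q.src a))) → ℕ} {a : Fin Q.numArrows}
    {w : Fin (d (Q.src a))} {v : Fin (d (Q.tgt a))} (h : ν ⟨a, w⟩ = v) :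
    arrowMap Q d K (monomialRep K ν) a (Pi.single ⟨Q.src a, w⟩ 1) = Pi.single ⟨Q.tgt a, v⟩ 1 := by
  rw [arrowMap_single]
  funext ⟨j, u⟩
  by_cases hj : j = Q.tgt a
  · subst hj
    simp [monomialRep, h, Pi.single_apply, Fin.ext_iff, eq_comm]
  · simp [hj]

/-- The pairs of an arrow `a` ending at `i` and one of the first `e (src a)` standard basis vectors
at the source of `a`. -/
def incoming (d e : Fin Q.n → ℕ) (i : Fin Q.n) : Finset (Σ a, Fin (d (Q.src a))) :=
  ({a | Q.tgt a = i} : Finset _).sigma fun a => {w : Fin (d (Q.src a)) | w < e (Q.src a)}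

theorem incoming_mono {e f : Fin Q.n → ℕ} (h : e ≤ f) (i : Fin Q.n) :
    incoming d e i ⊆ incoming d f i :=
  sigma_mono Subset.rfl fun a => monotone_filter_right _ fun _ _ hw => hw.trans_le (h (Q.src a))

theorem card_incoming {e : Fin Q.n → ℕ} (he : e ≤ d) (i : Fin Q.n) :
    #(incoming d e i) = inflow Q e i := by
  simp only [incoming, inflow, card_sigma, Fin.card_filter_val_lt, min_eq_right (he _)]

theorem exists_forall_spanSubset_initialSegment_inflow_le {e : ℕ → Fin Q.n → ℕ}
    (he : Antitone e) (hed : e 0 ≤ d) :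
    ∃ x : RepSpace Q d K, ∀ l, Pi.spanSubset K (initialSegment d (inflow Q (e l))) ≤
      ⨆ a, (Pi.spanSubset K (initialSegment d (e l))).map (arrowMap Q d K x a) := by
  choose ν hν using fun i => exists_image_eq_range_card_of_antitone
    (G := fun l => incoming d (e l) i) fun l m hlm => incoming_mono (he hlm) i
  refine ⟨monomialRep K fun c => ν (Q.tgt c.1) c, fun l => Submodule.span_le.2 ?_⟩
  rintro _ ⟨⟨i, v⟩, hv, rfl⟩
  obtain ⟨⟨a, w⟩, haw, hvν⟩ : ∃ c ∈ incoming d (e l) i, ν i c = v := by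
    rw [← mem_image, hν, card_incoming ((he l.zero_le).trans hed)]
    exact mem_range.2 hv
  obtain ⟨rfl, hw⟩ : Q.tgt a = i ∧ (w : ℕ) < e l (Q.src a) := by simpa [incoming] using haw
  rw [Pi.basisFun_apply, SetLike.mem_coe]
  refine Submodule.mem_iSup_of_mem a ⟨_, Submodule.subset_span ⟨⟨Q.src a, w⟩, hw, rfl⟩, ?_⟩
  simpa using arrowMap_monomialRep_single (ν := fun c => ν (Q.tgt c.1) c) hvν

variable (Q d K) in
theorem exists_forall_vdim_radPow_eq_genericRadDim :
    ∃ x : RepSpace Q d K, ∀ l, vdim Q d K (radPow Q d K x l) = genericRadDim Q d l := by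
  obtain ⟨x, hx⟩ := exists_forall_spanSubset_initialSegment_inflow_le (K := K)
    (genericRadDim_antitone d) le_rfl
  have h_le : ∀ l, Pi.spanSubset K (initialSegment d (genericRadDim Q d l)) ≤ radPow Q d K x l := by
    intro l
    induction l with
    | zero => exact (radPow_zero x).symm ▸ le_top
    | succ l ih =>
      calc Pi.spanSubset K (initialSegment d (genericRadDim Q d (l + 1)))
          ≤ Pi.spanSubset K (initialSegment d (inflow Q (genericRadDim Q d l))) :=
            Submodule.span_mono (Set.image_mono (initialSegment_mono inf_le_right))
        _ ≤ ⨆ a, (Pi.spanSubset K (initialSegment d (genericRadDim Q d l))).map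
              (arrowMap Q d K x a) := hx l
        _ ≤ ⨆ a, (radPow Q d K x l).map (arrowMap Q d K x a) :=
            iSup_mono fun a => Submodule.map_mono ih
        _ = radPow Q d K x (l + 1) := (radPow_succ x l).symm
  refine ⟨x, fun l => le_antisymm (vdim_radPow_le_genericRadDim x l) fun i => ?_⟩
  rw [← vdim_spanSubset_initialSegment (K := K) (genericRadDim_antitone d l.zero_le i)]
  exact vdim_mono (h_le l) i

end MonomialRepresentations

section RadicalLayering

theorem sum_radLayering_add_vdim_radPow {L : ℕ} (x : RepSpace Q d K) (l : Fin (L + 1))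
    (i : Fin Q.n) :
    ∑ j with j ≤ l, radLayering Q d K L x j i + vdim Q d K (radPow Q d K x (l + 1)) i = d i := by
  have h_anti : Antitone fun m => vdim Q d K (radPow Q d K x m) i :=
    fun _ _ h => vdim_mono (radPow_antitone x h) i
  calc ∑ j with j ≤ l, radLayering Q d K L x j i + vdim Q d K (radPow Q d K x (l + 1)) i
      = vdim Q d K (radPow Q d K x 0) i := by
        rw [← sum_range_tsub_add_of_antitone h_anti (l + 1), ← sum_fin_filter_le]
        rfl
    _ = d i := by rw [radPow_zero, vdim_top]

theorem dominates_radLayering_iff {L : ℕ} {x y : RepSpace Q d K} :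
    dominates (radLayering Q d K L x) (radLayering Q d K L y) ↔
      ∀ l ≤ L, vdim Q d K (radPow Q d K y (l + 1)) ≤ vdim Q d K (radPow Q d K x (l + 1)) := by
  have h_iff : ∀ (l : Fin (L + 1)) (i : Fin Q.n),
      ∑ j with j ≤ l, radLayering Q d K L x j i ≤ ∑ j with j ≤ l, radLayering Q d K L y j i ↔
        vdim Q d K (radPow Q d K y (l + 1)) i ≤ vdim Q d K (radPow Q d K x (l + 1)) i := by
    intro l i
    have hx := sum_radLayering_add_vdim_radPow x l i
    have hy := sum_radLayering_add_vdim_radPow y l i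
    omega
  simp only [dominates, h_iff, Fin.forall_iff, Nat.lt_succ_iff, Pi.le_def]

theorem vdim_radPow_eq_genericRadDim_of_dominates {L : ℕ} {x : RepSpace Q d K}
    (hx : ∀ y, dominates (radLayering Q d K L x) (radLayering Q d K L y)) :
    ∀ l ≤ L + 1, vdim Q d K (radPow Q d K x l) = genericRadDim Q d l := by
  obtain ⟨y, hy⟩ := exists_forall_vdim_radPow_eq_genericRadDim Q d K
  rintro (_ | l) hl
  · exact funext fun i => (radPow_zero x).symm ▸ vdim_top i
  · refine le_antisymm (vdim_radPow_le_genericRadDim x (l + 1)) ?_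
    rw [← hy]
    exact dominates_radLayering_iff.1 (hx y) l (Nat.le_of_succ_le_succ hl)

end RadicalLayering

end QuiverData

open QuiverData in
theorem statement_8_general (K : Type) [Field K] (Q : QuiverData) (L : ℕ)
    (d : Fin Q.n → ℕ) (T : Fin (L + 1) → Fin Q.n → ℕ)
    (hmin : ∀ x : RepSpace Q d K, dominates T (radLayering Q d K L x))
    (hattained : ∃ x : RepSpace Q d K, radLayering Q d K L x = T)
    (l : Fin (L + 1)) (i : Fin Q.n) :
    (T l i : ℤ) = cumLayer Q (fun j => (d j : ℤ)) (l : ℕ) i -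
      (if (l : ℕ) = 0 then 0 else cumLayer Q (fun j => (d j : ℤ)) ((l : ℕ) - 1) i) := by
  obtain ⟨x, rfl⟩ := hattained
  have hdim := vdim_radPow_eq_genericRadDim_of_dominates hmin
  rw [cumLayer_sub_cumLayer_pred, radLayering, hdim l (by omega), hdim (l + 1) (by omega),
    Nat.cast_sub (genericRadDim_antitone d (Nat.le_succ l) i)]

open QuiverData in
/-- Suppose all paths of `Q` have length at most `L`, and let `T` be the
generic (= minimal, attained on a dense open set) radical layering of the modules in
`Rep_d(KQ)`. Then the dimension vectors of the layers of `T` are given by the recursion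
`t⁽⁰⁾ = sup{0, d − d·A}`,
`t⁽ˡ⁺¹⁾ = sup{0, (d − ∑_{k≤l} t⁽ᵏ⁾) − (d − ∑_{k≤l} t⁽ᵏ⁾)·A}` (componentwise suprema in
`ℤⁿ`, `A` the adjacency matrix), expressed here via the partial sums `cumLayer`. -/
theorem statement_8 (K : Type) [Field K] [IsAlgClosed K]
    (Q : QuiverData) (L : ℕ)
    (hbound : ∀ w : List (Fin Q.numArrows), IsPathWord Q w → w.length ≤ L)
    (d : Fin Q.n → ℕ) (T : Fin (L+1) → Fin Q.n → ℕ)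
    (hmin : ∀ x : RepSpace Q d K, dominates T (radLayering Q d K L x))
    (hgen : ∃ U : Set (RepSpace Q d K), IsOpen U ∧ Dense U ∧
      ∀ x ∈ U, radLayering Q d K L x = T) :
    ∀ (l : Fin (L+1)) (i : Fin Q.n),
      (T l i : ℤ) = cumLayer Q (fun j => (d j : ℤ)) (l : ℕ) i -
        (if (l : ℕ) = 0 then 0 else cumLayer Q (fun j => (d j : ℤ)) ((l : ℕ) - 1) i) := by
  obtain ⟨U, -, hdense, hU⟩ := hgen
  obtain ⟨x, hx⟩ := hdense.nonempty
  exact statement_8_general K Q L d T hmin ⟨x, hU x hx⟩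
end
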